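/- arXiv:2510.01811 — 2 statements merged into one kernel-verified Lean document; each statement's English description precedes it below -/
import Mathlib

section
/- Let F_q be a finite field, let m ≥ 1, let P ⊆ ℝ^m be a lattice polytope contained in the nonnegative orthant, and for 1 ≤ j ≤ m let ℓ_j denote the length of the projection of P onto the j-th coordinate axis. Let S = {p_1,…,p_n} ⊆ (F_q^*)^m be a set of n distinct points containing a box S_1 × ⋯ × S_m with S_j ⊆ F_q^*, |S_j| = s_j > ℓ_j. Let λ be a positive integer with λ < min_{1≤j≤m} s_j / ℓ_j, and let t be a positive integer such that n < Σ_{k=0}^{λ} |kP ∩ ℤ^m| and t > n − ∏_{j=1}^m (s_j − λ·ℓ_j). Then for every y = (y_1,…,y_n) ∈ F_q^n there exists a nonzero polynomial Q ∈ F_q[X_1,…,X_m,Y] with support contained in λ·Pyr(P) ∩ ℤ^{m+1} and Q(p_j, y_j) = 0 for all j, such that every f ∈ L_q(P) satisfying f(p_j) = y_j for at least t indices j satisfies Q(X_1,…,X_m, f(X_1,…,X_m)) = 0 identically. -/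
open scoped Classical Pointwise

/-- The set of lattice points of a subset of `ℝ^m`, viewed as integer vectors. -/
def latticePts {m : ℕ} (P : Set (Fin m → ℝ)) : Set (Fin m → ℤ) :=
  {x | (fun j => (x j : ℝ)) ∈ P}

/-- `Pyr(P) ⊆ ℝ^{m+1}`: the convex hull of the point `(0,…,0,1)` together with `P × {0}`. -/
noncomputable def pyr {m : ℕ} (P : Set (Fin m → ℝ)) : Set (Fin (m + 1) → ℝ) :=
  convexHull ℝ ({Fin.snoc (0 : Fin m → ℝ) (1 : ℝ)} ∪ (fun x => Fin.snoc x (0 : ℝ)) '' P)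

lemma uni_nonroots {F : Type*} [Field F] (g : Polynomial F) (hg : g ≠ 0) (a d : ℕ)
    (hsup : ∀ i, g.coeff i ≠ 0 → a ≤ i ∧ i ≤ a + d) (S : Finset F) (hS : ∀ c ∈ S, c ≠ 0) :
    S.card - d ≤ (S.filter (fun c => g.eval c ≠ 0)).card := by
  obtain ⟨h, rfl⟩ : Polynomial.X ^ a ∣ g := by
    rw [Polynomial.X_pow_dvd_iff]
    intro i hi
    by_contra hne
    have := (hsup i hne).1
    omega
  have hh : h ≠ 0 := right_ne_zero_of_mul hg
  have hdeg : h.natDegree ≤ d := by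
    have := (hsup (h.natDegree + a) (by
      rw [Polynomial.coeff_X_pow_mul]; simpa using hh)).2
    omega
  have h1 : (S.filter (fun c => ¬ (Polynomial.X ^ a * h).eval c ≠ 0)).card ≤ d := by
    refine le_trans ?_ ((Polynomial.card_roots' h).trans hdeg)
    refine le_trans (Finset.card_le_card (t := h.roots.toFinset) ?_) (Multiset.toFinset_card_le _)
    intro c hc
    simp only [Finset.mem_filter, not_not, Polynomial.eval_mul, Polynomial.eval_pow,
      Polynomial.eval_X] at hc
    have : h.eval c = 0 := by
      rcases mul_eq_zero.1 hc.2 with h0 | h0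
      · exact absurd (by by_contra hcc; exact pow_ne_zero a hcc h0) (hS c hc.1)
      · exact h0
    simp [hh, this]
  have h2 := Finset.card_filter_add_card_filter_not (s := S)
    (fun c => (Polynomial.X ^ a * h).eval c ≠ 0)
  omega

lemma box_nonroots {F : Type*} [Field F] : ∀ (m : ℕ) (g : MvPolynomial (Fin m) F) (_ : g ≠ 0)
    (a d : Fin m → ℕ) (_ : ∀ u ∈ g.support, ∀ j, a j ≤ u j ∧ u j ≤ a j + d j)
    (S : Fin m → Finset F) (_ : ∀ j, ∀ c ∈ S j, c ≠ 0),
    ∏ j, ((S j).card - d j) ≤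
      ((Fintype.piFinset S).filter (fun x => MvPolynomial.eval x g ≠ 0)).card := by
  intro m
  induction m with
  | zero =>
    intro g hg a d _ S _
    simp only [Finset.univ_eq_empty, Finset.prod_empty]
    rw [Nat.one_le_iff_ne_zero, ← Nat.pos_iff_ne_zero, Finset.card_pos]
    refine ⟨Fin.elim0, ?_⟩
    rw [Finset.mem_filter]
    refine ⟨Fintype.mem_piFinset.2 fun j => j.elim0, ?_⟩
    rw [MvPolynomial.eq_C_of_isEmpty g] at hg ⊢
    simpa using hg
  | succ m ih =>
    intro g hg a d hsup S hS
    set G := MvPolynomial.finSuccEquiv F m g with hG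
    have hG0 : G ≠ 0 := by simpa [hG] using hg
    have hcoef : ∀ i, ∀ v ∈ (G.coeff i).support, ∀ j, 
        (Fin.cons (a 0) (fun j : Fin m => a j.succ) : Fin (m+1) → ℕ) j ≤ (Finsupp.cons i v) j ∧
        (Finsupp.cons i v) j ≤ a j + d j := by
      intro i v hv j
      have := hsup _ (MvPolynomial.mem_support_coeff_finSuccEquiv.1 hv) j
      refine ⟨?_, this.2⟩
      refine le_trans (le_of_eq ?_) this.1
      cases j using Fin.cases <;> simp
    set c := G.leadingCoeff with hc
    have hc0 : c ≠ 0 := by simpa [hc] using hG0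
    have ih' := ih c hc0 (fun j => a j.succ) (fun j => d j.succ) (by
      intro v hv j
      have := hcoef G.natDegree v hv j.succ
      simpa using this) (fun j => S j.succ) (fun j => hS j.succ)
    set B := (Fintype.piFinset (fun j : Fin m => S j.succ)).filter
      (fun x => MvPolynomial.eval x c ≠ 0) with hB
    have hfib : ∀ x ∈ B, (S 0).card - d 0 ≤
        ((S 0).filter (fun z => (G.map (MvPolynomial.eval x)).eval z ≠ 0)).card := by
      intro x hx
      rw [hB, Finset.mem_filter] at hx
      refine uni_nonroots _ ?_ (a 0) (d 0) ?_ _ (hS 0)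
      · intro h0
        apply hx.2
        have := congrArg (fun q => Polynomial.coeff q G.natDegree) h0
        simpa [Polynomial.coeff_map] using this
      · intro i hi
        rw [Polynomial.coeff_map] at hi
        have hne : G.coeff i ≠ 0 := fun h => hi (by rw [h, map_zero])
        obtain ⟨v, hv⟩ := MvPolynomial.support_nonempty.2 hne
        simpa using hcoef i v hv 0
    rw [Fin.prod_univ_succ, mul_comm]
    calc _ ≤ B.card * ((S 0).card - d 0) := Nat.mul_le_mul_right _ ih'
      _ ≤ ∑ x ∈ B, ((S 0).filter (fun z => (G.map (MvPolynomial.eval x)).eval z ≠ 0)).card := by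
        rw [← smul_eq_mul]; exact Finset.card_nsmul_le_sum _ _ _ hfib
      _ = (B.sigma (fun x =>
          (S 0).filter (fun z => (G.map (MvPolynomial.eval x)).eval z ≠ 0))).card := by
        rw [Finset.card_sigma]
      _ ≤ _ := by
        refine Finset.card_le_card_of_injOn (fun w => Fin.cons w.2 w.1) ?_ ?_
        · rintro ⟨x, z⟩ hw
          simp only [Finset.coe_sigma, Set.mem_sigma_iff, Finset.mem_coe, hB,
            Finset.mem_filter, Fintype.mem_piFinset] at hw ⊢
          refine ⟨?_, ?_⟩
          · intro j
            cases j using Fin.cases with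
            | zero => simpa using hw.2.1
            | succ j => simpa using hw.1.1 j
          · rw [MvPolynomial.eval_eq_eval_mv_eval']
            exact hw.2.2
        · rintro ⟨x, z⟩ _ ⟨x', z'⟩ _ h
          obtain ⟨h1, h2⟩ := Fin.cons_inj.1 h
          subst h1 h2
          rfl

lemma exists_interp {F : Type*} [Field F] {σ : Type*} (n : ℕ) (U : Finset (σ →₀ ℕ))
    (hU : n < U.card) (z : Fin n → σ → F) :
    ∃ Q : MvPolynomial σ F, Q ≠ 0 ∧ Q.support ⊆ U ∧ ∀ j, MvPolynomial.eval (z j) Q = 0 := by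
  let φ : (U → F) →ₗ[F] MvPolynomial σ F :=
    ∑ u : U, (MvPolynomial.monomial (R := F) u.1) ∘ₗ (LinearMap.proj u)
  let ψ : (U → F) →ₗ[F] (Fin n → F) :=
    (LinearMap.pi fun j => (MvPolynomial.aeval (z j) : MvPolynomial σ F →ₐ[F] F).toLinearMap) ∘ₗ φ
  have hk : LinearMap.ker ψ ≠ ⊥ := by
    apply LinearMap.ker_ne_bot_of_finrank_lt
    simpa using hU
  obtain ⟨c, hc, hc0⟩ := Submodule.exists_mem_ne_zero_of_ne_bot hk
  have hφ : φ c = ∑ u : U, MvPolynomial.monomial u.1 (c u) := by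
    simp [φ]
  have hco : ∀ u : U, (φ c).coeff u.1 = c u := by
    intro u
    rw [hφ, MvPolynomial.coeff_sum]
    simp only [MvPolynomial.coeff_monomial]
    rw [Finset.sum_eq_single u]
    · simp
    · intro b _ hb
      rw [if_neg (fun h => hb (Subtype.ext h))]
    · simp
  refine ⟨φ c, ?_, ?_, ?_⟩
  · intro h
    apply hc0
    funext u
    rw [← hco, h]; simp
  · intro v hv
    by_contra hvU
    rw [MvPolynomial.mem_support_iff, hφ, MvPolynomial.coeff_sum] at hv
    apply hv
    apply Finset.sum_eq_zero
    intro u _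
    rw [MvPolynomial.coeff_monomial, if_neg]
    rintro rfl
    exact hvU u.2
  · intro j
    have := congrFun (LinearMap.mem_ker.1 hc) j
    simpa [ψ, MvPolynomial.aeval_eq_eval] using this

def InL {F : Type*} [Field F] {m : ℕ} (A : Set (Fin m → ℝ)) (f : MvPolynomial (Fin m) F) : Prop :=
  ∀ u ∈ f.support, (fun j => (u j : ℝ)) ∈ A

lemma InL.mul {F : Type*} [Field F] {m : ℕ} {A B : Set (Fin m → ℝ)}
    {f g : MvPolynomial (Fin m) F} (hf : InL A f) (hg : InL B g) : InL (A + B) (f * g) := by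
  intro u hu
  obtain ⟨v, hv, w, hw, rfl⟩ := Finset.mem_add.1 (MvPolynomial.support_mul _ _ hu)
  refine Set.mem_add.2 ⟨_, hf v hv, _, hg w hw, ?_⟩
  funext j
  simp

lemma InL.sum {F : Type*} [Field F] {m : ℕ} {A : Set (Fin m → ℝ)} {ι : Type*} (s : Finset ι)
    (f : ι → MvPolynomial (Fin m) F) (hf : ∀ i ∈ s, InL A (f i)) : InL A (∑ i ∈ s, f i) := by
  intro u hu
  obtain ⟨i, hi, hu⟩ := Finset.mem_biUnion.1 (MvPolynomial.support_sum hu)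
  exact hf i hi u hu

lemma InL.pow {F : Type*} [Field F] {m : ℕ} {P : Set (Fin m → ℝ)} (hP : Convex ℝ P)
    (hne : P.Nonempty) {f : MvPolynomial (Fin m) F} (hf : InL P f) (k : ℕ) :
    InL ((k : ℝ) • P) (f ^ k) := by
  induction k with
  | zero =>
    intro u hu
    have hu0 : u = 0 := by
      by_contra h
      rw [pow_zero, MvPolynomial.mem_support_iff, MvPolynomial.coeff_one, if_neg (Ne.symm h)] at hu
      exact hu rfl
    subst hu0
    simp only [Nat.cast_zero, Set.zero_smul_set hne]
    ext j; simp
  | succ k ih =>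
    rw [pow_succ, Nat.cast_succ, hP.add_smul (Nat.cast_nonneg k) zero_le_one, one_smul]
    exact ih.mul hf

lemma mem_pyr {m : ℕ} {P : Set (Fin m → ℝ)} (lam k : ℕ) (hlam : 1 ≤ lam) (hk : k ≤ lam)
    (u : Fin (m+1) → ℝ) (hul : u (Fin.last m) = k)
    (hu : (fun j : Fin m => u j.castSucc) ∈ ((lam : ℝ) - k) • P) : u ∈ (lam : ℝ) • pyr P := by
  obtain ⟨x, hx, hxu⟩ := hu
  have hl : (0 : ℝ) < lam := by exact_mod_cast hlam
  have hkl : (k : ℝ) ≤ lam := by exact_mod_cast hk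
  have hmem : ((k : ℝ) / lam) • (Fin.snoc (0 : Fin m → ℝ) (1 : ℝ) : Fin (m+1) → ℝ)
      + (((lam : ℝ) - k) / lam) • (Fin.snoc x (0 : ℝ) : Fin (m+1) → ℝ) ∈ pyr P := by
    have hA : (Fin.snoc (0 : Fin m → ℝ) (1 : ℝ) : Fin (m+1) → ℝ) ∈ pyr P :=
      subset_convexHull ℝ _ (Or.inl rfl)
    have hB : (Fin.snoc x (0 : ℝ) : Fin (m+1) → ℝ) ∈ pyr P :=
      subset_convexHull ℝ _ (Or.inr ⟨x, hx, rfl⟩)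
    have hC : Convex ℝ (pyr P) := convex_convexHull ℝ _
    exact hC hA hB (by positivity) (div_nonneg (by linarith) hl.le) (by field_simp; ring)
  refine ⟨_, hmem, ?_⟩
  funext j
  cases j using Fin.lastCases with
  | last => simp [hul]; field_simp
  | cast j =>
    have := congrFun hxu j
    simp at this
    simp [← this]; field_simp

lemma exists_exps {m : ℕ} (P : Set (Fin m → ℝ)) (hPpos : P ⊆ {x | ∀ j, 0 ≤ x j}) (lam : ℕ) :
    ∃ U : Finset (Fin (m+1) →₀ ℕ),
      U.card = ∑ k ∈ Finset.range (lam + 1), (latticePts ((k : ℝ) • P)).ncard ∧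
      ∀ u ∈ U, u (Fin.last m) ≤ lam ∧
        (fun j : Fin m => (u j.castSucc : ℝ)) ∈ ((lam : ℝ) - (u (Fin.last m) : ℕ)) • P := by
  have hT : ∀ k : ℕ, ∃ T : Finset (Fin m → ℤ), T.card = (latticePts ((k : ℝ) • P)).ncard ∧
      ∀ x ∈ T, x ∈ latticePts ((k : ℝ) • P) := by
    intro k
    by_cases h : (latticePts ((k : ℝ) • P)).Finite
    · exact ⟨h.toFinset, (Set.ncard_eq_toFinset_card _ h).symm, by simp⟩
    · exact ⟨∅, by rw [Set.Infinite.ncard h]; rfl, by simp⟩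
  choose T hTc hT using hT
  have hpos : ∀ k, ∀ x ∈ T k, ∀ j, 0 ≤ x j := by
    intro k x hx j
    obtain ⟨y, hy, hyx⟩ := hT k x hx
    have h1 := congrFun hyx j
    simp at h1
    have h2 : (0:ℝ) ≤ x j := by
      rw [← h1]; exact mul_nonneg (Nat.cast_nonneg _) (hPpos hy j)
    exact_mod_cast h2
  let e : (Σ _ : ℕ, (Fin m → ℤ)) → (Fin (m+1) →₀ ℕ) := fun w =>
    Finsupp.equivFunOnFinite.symm (Fin.snoc (fun j => (w.2 j).toNat) (lam - w.1))
  refine ⟨((Finset.range (lam+1)).sigma T).image e, ?_, ?_⟩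
  · rw [Finset.card_image_of_injOn, Finset.card_sigma]
    · simp [hTc]
    · rintro ⟨k, x⟩ h ⟨k', x'⟩ h' heq
      simp only [Finset.coe_sigma, Set.mem_sigma_iff, Finset.mem_coe, Finset.mem_range] at h h'
      have heq := Finsupp.equivFunOnFinite.symm.injective heq
      have hk : lam - k = lam - k' := by simpa using congrFun heq (Fin.last m)
      have hk : k = k' := by omega
      subst hk
      have hx : x = x' := by
        funext j
        have h1 : (x j).toNat = (x' j).toNat := by simpa using congrFun heq j.castSucc
        have := hpos k x h.2 j
        have := hpos k x' h'.2 j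
        omega
      rw [hx]
  · intro u hu
    obtain ⟨⟨k, x⟩, hw, rfl⟩ := Finset.mem_image.1 hu
    simp only [Finset.mem_sigma, Finset.mem_range] at hw
    have hk : k ≤ lam := by omega
    refine ⟨by simp [e], ?_⟩
    have h1 : (fun j : Fin m => ((e ⟨k, x⟩) j.castSucc : ℝ)) = fun j => (x j : ℝ) := by
      funext j
      have : (((x j).toNat : ℤ) : ℝ) = x j := by rw [Int.toNat_of_nonneg (hpos k x hw.2 j)]
      rw [← this]
      simp only [e, Finsupp.equivFunOnFinite_symm_apply_apply, Fin.snoc_castSucc, Int.cast_natCast]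
    have h2 : ((lam : ℝ) - ((e ⟨k, x⟩) (Fin.last m) : ℕ)) = k := by
      simp [e, Nat.cast_sub hk]
    rw [h1, h2]
    exact hT k x hw.2

lemma InL_subst {F : Type*} [Field F] {m : ℕ} {P : Set (Fin m → ℝ)} (hP : Convex ℝ P)
    (hne : P.Nonempty) {f : MvPolynomial (Fin m) F} (hf : InL P f) (lam : ℕ)
    (Q : MvPolynomial (Fin (m+1)) F)
    (hQ : ∀ u ∈ Q.support, u (Fin.last m) ≤ lam ∧
        (fun j : Fin m => (u j.castSucc : ℝ)) ∈ ((lam : ℝ) - (u (Fin.last m) : ℕ)) • P) :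
    InL ((lam : ℝ) • P) (MvPolynomial.aeval (Fin.snoc MvPolynomial.X f :
      Fin (m+1) → MvPolynomial (Fin m) F) Q) := by
  rw [MvPolynomial.aeval_def, MvPolynomial.eval₂_eq']
  refine InL.sum _ _ fun u hu => ?_
  obtain ⟨h1, h2⟩ := hQ u hu
  have h1' : ((u (Fin.last m) : ℕ) : ℝ) ≤ lam := by exact_mod_cast h1
  rw [Fin.prod_univ_castSucc, ← mul_assoc]
  have e1 : (lam : ℝ) • P = ((lam : ℝ) - (u (Fin.last m) : ℕ)) • P
      + ((u (Fin.last m) : ℕ) : ℝ) • P := by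
    rw [← hP.add_smul (by linarith) (by positivity)]; simp
  rw [e1]
  refine InL.mul ?_ (by simpa using hf.pow hP hne _)
  have e2 : (algebraMap F (MvPolynomial (Fin m) F)) (Q.coeff u) *
      ∏ i : Fin m, (Fin.snoc MvPolynomial.X f : Fin (m+1) → MvPolynomial (Fin m) F) i.castSucc
        ^ u i.castSucc = MvPolynomial.monomial
        (Finsupp.equivFunOnFinite.symm fun j : Fin m => u j.castSucc) (Q.coeff u) := by
    rw [MvPolynomial.monomial_eq, Finsupp.prod_fintype _ _ (by simp)]
    simp [MvPolynomial.algebraMap_eq]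
  rw [e2]
  intro v hv
  have := Finset.mem_singleton.1 (MvPolynomial.support_monomial_subset hv)
  subst this
  simpa using h2

/-- **Basic list-decoding theorem, projection-length version.**  Let `P ⊆ ℝ^m` be a lattice
polytope in the nonnegative orthant and let `ℓ_j` be the length of the projection of `P` onto
the `j`-th axis.  Let `S = {p_1,…,p_n} ⊆ (F_q^*)^m` be distinct points containing a box
`S_1 × ⋯ × S_m` with `|S_j| = s_j > ℓ_j`.  Let `λ ≥ 1` with `λ < min_j s_j/ℓ_j` and let
`t ≥ 1` satisfy `n < Σ_{k=0}^{λ} |kP ∩ ℤ^m|` and `t > n − ∏_j (s_j − λ·ℓ_j)`.  Then for every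
`y ∈ F_q^n` there is a nonzero `Q ∈ F_q[X_1,…,X_m,Y]` with support in `λ·Pyr(P) ∩ ℤ^{m+1}`
and `Q(p_j, y_j) = 0` for all `j`, such that every `f ∈ L_q(P)` agreeing with `y` on at
least `t` indices satisfies `Q(X, f(X)) = 0`. -/
theorem basic_list_decoding_proj
    (Fq : Type*) [Field Fq] [Fintype Fq]
    (m : ℕ) (hm : 1 ≤ m) (P : Set (Fin m → ℝ))
    (hP : ∃ V : Finset (Fin m → ℤ),
      P = convexHull ℝ ((fun (v : Fin m → ℤ) (j : Fin m) => (v j : ℝ)) '' ↑V))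
    (hPne : P.Nonempty)
    (hPpos : P ⊆ {x | ∀ j, 0 ≤ x j})
    (ℓ : Fin m → ℝ)
    (hℓ : ∀ j, ℓ j = sSup ((fun x => x j) '' P) - sInf ((fun x => x j) '' P))
    (n : ℕ) (p : Fin n → (Fin m → Fq)) (hp_inj : Function.Injective p)
    (hp0 : ∀ j, ∀ i, p j i ≠ 0)
    (Sbox : Fin m → Finset Fq) (hSbox0 : ∀ j, ∀ c ∈ Sbox j, c ≠ 0)
    (s : Fin m → ℕ) (hs : ∀ j, (Sbox j).card = s j) (hsℓ : ∀ j, ℓ j < s j)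
    (hboxS : ∀ q ∈ Fintype.piFinset Sbox, ∃ j : Fin n, p j = q)
    (lam : ℕ) (hlam : 1 ≤ lam)
    (hlam_lt : ∀ j, (lam : ℝ) * ℓ j < s j)
    (t : ℕ) (ht : 1 ≤ t)
    (hn_lt : n < ∑ k ∈ Finset.range (lam + 1), (latticePts ((k : ℝ) • P)).ncard)
    (ht_gt : (n : ℝ) - ∏ j, ((s j : ℝ) - lam * ℓ j) < t) :
    ∀ y : Fin n → Fq,
      ∃ Q : MvPolynomial (Fin (m + 1)) Fq, Q ≠ 0 ∧
        (∀ u ∈ Q.support, (fun j => (u j : ℝ)) ∈ (lam : ℝ) • pyr P) ∧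
        (∀ j : Fin n, MvPolynomial.eval (Fin.snoc (p j) (y j)) Q = 0) ∧
        ∀ f : MvPolynomial (Fin m) Fq,
          (∀ u ∈ f.support, (fun j => (u j : ℝ)) ∈ P) →
          t ≤ (Finset.univ.filter (fun j : Fin n => MvPolynomial.eval (p j) f = y j)).card →
          MvPolynomial.aeval (Fin.snoc MvPolynomial.X f) Q = 0 := by
  intro y
  obtain ⟨V, hV⟩ := hP
  have hconv : Convex ℝ P := hV ▸ convex_convexHull ℝ _
  have hcomp : IsCompact P := by
    rw [hV]; exact (V.finite_toSet.image _).isCompact_convexHull ℝ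
  obtain ⟨U, hUc, hU⟩ := exists_exps P hPpos lam
  obtain ⟨Q, hQ0, hQU, hQz⟩ := exists_interp n U (hUc ▸ hn_lt)
    (fun j => (Fin.snoc (p j) (y j) : Fin (m + 1) → Fq))
  refine ⟨Q, hQ0, ?_, hQz, ?_⟩
  · intro u hu
    obtain ⟨h1, h2⟩ := hU u (hQU hu)
    exact mem_pyr lam _ hlam h1 _ rfl h2
  intro f hf hagree
  by_contra hg0
  set g := MvPolynomial.aeval (Fin.snoc MvPolynomial.X f :
      Fin (m + 1) → MvPolynomial (Fin m) Fq) Q with hg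
  have hgL : InL ((lam : ℝ) • P) g :=
    InL_subst hconv hPne hf lam Q (fun u hu => hU u (hQU hu))
  have hbb : ∀ j, BddBelow ((fun x : Fin m → ℝ => x j) '' P) := fun j =>
    (hcomp.image (continuous_apply j)).bddBelow
  have hba : ∀ j, BddAbove ((fun x : Fin m → ℝ => x j) '' P) := fun j =>
    (hcomp.image (continuous_apply j)).bddAbove
  have hl0 : ∀ j, 0 ≤ (lam : ℝ) * ℓ j := by
    intro j
    obtain ⟨x, hx⟩ := hPne
    have h1 := csInf_le (hbb j) ⟨x, hx, rfl⟩
    have h2 := le_csSup (hba j) ⟨x, hx, rfl⟩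
    rw [hℓ j]
    exact mul_nonneg (Nat.cast_nonneg _) (by linarith)
  have key := box_nonroots m g hg0
    (fun j => ⌈(lam : ℝ) * sInf ((fun x : Fin m → ℝ => x j) '' P)⌉₊)
    (fun j => ⌊(lam : ℝ) * ℓ j⌋₊) (by
      intro u hu j
      obtain ⟨x, hx, hxu⟩ := hgL u hu
      have h0 : (lam : ℝ) * x j = u j := by simpa using congrFun hxu j
      have h1 := csInf_le (hbb j) ⟨x, hx, rfl⟩
      have h2 := le_csSup (hba j) ⟨x, hx, rfl⟩
      have hlr : (0 : ℝ) ≤ lam := Nat.cast_nonneg _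
      have h3 := mul_le_mul_of_nonneg_left h1 hlr
      have h4 := mul_le_mul_of_nonneg_left h2 hlr
      simp only at h3 h4
      have ha : ⌈(lam : ℝ) * sInf ((fun x : Fin m → ℝ => x j) '' P)⌉₊ ≤ u j := by
        rw [Nat.ceil_le]; linarith
      refine ⟨ha, ?_⟩
      have hle : u j - ⌈(lam : ℝ) * sInf ((fun x : Fin m → ℝ => x j) '' P)⌉₊
          ≤ ⌊(lam : ℝ) * ℓ j⌋₊ := by
        apply Nat.le_floor
        rw [Nat.cast_sub ha, hℓ j, mul_sub]
        have := Nat.le_ceil ((lam : ℝ) * sInf ((fun x : Fin m → ℝ => x j) '' P))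
        linarith
      exact Nat.sub_le_iff_le_add'.1 hle) Sbox hSbox0
  have hev : ∀ j, MvPolynomial.eval (p j) f = y j → MvPolynomial.eval (p j) g = 0 := by
    intro j hj
    rw [← hQz j, hg, ← MvPolynomial.coe_aeval_eq_eval, ← MvPolynomial.coe_aeval_eq_eval]
    have : ((MvPolynomial.aeval (p j) : MvPolynomial (Fin m) Fq →ₐ[Fq] Fq).comp
        (MvPolynomial.aeval (Fin.snoc MvPolynomial.X f :
          Fin (m + 1) → MvPolynomial (Fin m) Fq))) =
        (MvPolynomial.aeval (Fin.snoc (p j) (y j) : Fin (m + 1) → Fq)) := by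
      apply MvPolynomial.algHom_ext
      intro i
      cases i using Fin.lastCases with
      | last => simp [← hj, MvPolynomial.aeval_eq_eval]
      | cast i => simp
    exact DFunLike.congr_fun this Q
  have hcard1 : ((Fintype.piFinset Sbox).filter (fun x => MvPolynomial.eval x g ≠ 0)).card ≤
      (Finset.univ.filter (fun j : Fin n => ¬ MvPolynomial.eval (p j) f = y j)).card := by
    refine le_trans (Finset.card_le_card (t := (Finset.univ.filter
      (fun j : Fin n => ¬ MvPolynomial.eval (p j) f = y j)).image p) ?_) Finset.card_image_le
    intro x hx
    rw [Finset.mem_filter] at hx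
    obtain ⟨j, rfl⟩ := hboxS x hx.1
    exact Finset.mem_image_of_mem _ (by simpa using fun h => hx.2 (hev j h))
  have hcard2 := Finset.card_filter_add_card_filter_not (s := (Finset.univ : Finset (Fin n)))
    (fun j : Fin n => MvPolynomial.eval (p j) f = y j)
  rw [Finset.card_univ, Fintype.card_fin] at hcard2
  have hprod : ∏ j, ((s j : ℝ) - lam * ℓ j) ≤
      ((∏ j, ((Sbox j).card - ⌊(lam : ℝ) * ℓ j⌋₊) : ℕ) : ℝ) := by
    rw [Nat.cast_prod]
    refine Finset.prod_le_prod (fun j _ => by linarith [hlam_lt j]) (fun j _ => ?_)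
    have h1 := Nat.floor_le (hl0 j)
    have h2 : (s j : ℝ) ≤ ((s j - ⌊(lam : ℝ) * ℓ j⌋₊ : ℕ) : ℝ) + (⌊(lam : ℝ) * ℓ j⌋₊ : ℝ) := by
      exact_mod_cast le_tsub_add
    rw [hs j]
    linarith
  have hfin : (∏ j, ((Sbox j).card - ⌊(lam : ℝ) * ℓ j⌋₊)) + t ≤ n := by omega
  have hfin' : ((∏ j, ((Sbox j).card - ⌊(lam : ℝ) * ℓ j⌋₊) : ℕ) : ℝ) + t ≤ n := by
    exact_mod_cast hfin
  linarith
end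

section
/- Let F_q be a finite field, let m ≥ 1, let P ⊆ ℝ^m be an m-dimensional lattice polytope contained in the nonnegative orthant, and for 1 ≤ j ≤ m let ℓ_j denote the length of the projection of P onto the j-th coordinate axis. Let S = {p_1,…,p_n} ⊆ (F_q^*)^m be a set of n distinct points containing a box S_1 × ⋯ × S_m with S_j ⊆ F_q^*, |S_j| = s_j > ℓ_j. Set λ = ⌈ e·((m+1)·n / vol(P))^{1/(m+1)} ⌉ and assume min_{1≤j≤m} s_j/ℓ_j > λ ≥ m. Then for every integer t > n − ∏_{j=1}^m (s_j − λ·ℓ_j) and every y = (y_1,…,y_n) ∈ F_q^n, there exists a nonzero polynomial Q ∈ F_q[X_1,…,X_m,Y] with support contained in λ·Pyr(P) ∩ ℤ^{m+1} and Q(p_j, y_j) = 0 for all j, such that every f ∈ L_q(P) satisfying f(p_j) = y_j for at least t indices j satisfies Q(X_1,…,X_m, f(X_1,…,X_m)) = 0 identically. -/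
open scoped Classical Pointwise

namespace LD
section part1
variable {κ E : Type*} [Fintype κ] [AddCommGroup E] [Module ℝ E]

def IsBas (v : κ → E) (B : Finset κ) : Prop :=
  LinearIndepOn ℝ v (B : Set κ) ∧ Submodule.span ℝ (v '' (B : Set κ)) = ⊤

def IsCoord (v : κ → E) (B : Finset κ) (R : E →ₗ[ℝ] (κ → ℝ)) : Prop :=
  (∀ x k, k ∉ B → R x k = 0) ∧ (∀ x, ∑ k, R x k • v k = x) ∧
    (∀ c : κ → ℝ, (∀ k, k ∉ B → c k = 0) → R (∑ k, c k • v k) = c)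

lemma exists_coord {v : κ → E} {B : Finset κ} (h : IsBas v B) :
    ∃ R : E →ₗ[ℝ] (κ → ℝ), IsCoord v B R := by
  obtain ⟨h1, h2⟩ := h
  let b : Module.Basis B ℝ E := Module.Basis.mk (v := fun k : B => v k) h1 (by
    rw [← h2, Set.image_eq_range]; rfl)
  have hb : ∀ k : B, b k = v k := fun k => Module.Basis.mk_apply h1 _ k
  let R : E →ₗ[ℝ] (κ → ℝ) := LinearMap.pi fun k => if hk : k ∈ B then b.coord ⟨k, hk⟩ else 0
  have hR : ∀ x (k : B), R x k = b.repr x k := by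
    intro x k; simp [R]
  have hR0 : ∀ x k, k ∉ B → R x k = 0 := by
    intro x k hk; simp [R, hk]
  have hsum : ∀ c : κ → ℝ, (∀ k, k ∉ B → c k = 0) → ∑ k, c k • v k = ∑ k : B, c k • b k := by
    intro c hc
    simp only [hb]
    rw [Finset.sum_coe_sort B (fun k => c k • v k)]
    symm
    apply Finset.sum_subset (Finset.subset_univ _)
    intro k _ hk; simp [hc k hk]
  refine ⟨R, hR0, ?_, ?_⟩
  · intro x
    rw [hsum _ (hR0 x)]
    simp only [hR]
    exact b.sum_repr x
  · intro c hc
    rw [hsum c hc]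
    ext k
    by_cases hk : k ∈ B
    · have := hR (∑ k : B, c k • b k) ⟨k, hk⟩
      simp only at this
      rw [this, Module.Basis.repr_sum_self b (fun k : B => c k)]
    · rw [hR0 _ _ hk, hc k hk]

lemma coord_self {v : κ → E} {B : Finset κ} {R : E →ₗ[ℝ] (κ → ℝ)} (hR : IsCoord v B R)
    {k : κ} (hk : k ∈ B) : R (v k) = Pi.single k 1 := by
  have := hR.2.2 (Pi.single k 1) (fun j hj => by
    rw [Pi.single_apply, if_neg]; rintro rfl; exact hj hk)
  rw [← this]
  congr 1
  simp [Pi.single_apply]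

lemma exists_generic (v : κ → E) (R : Finset κ → E →ₗ[ℝ] (κ → ℝ))
    (hR : ∀ B, IsBas v B → IsCoord v B (R B)) :
    ∃ ω : κ → ℝ, ∀ B, IsBas v B → ∀ k, k ∉ B → ∑ u, R B (v k) u * ω u ≠ ω k := by
  let I := {q : Finset κ × κ // IsBas v q.1 ∧ q.2 ∉ q.1}
  let F : I → Module.Dual ℝ (κ → ℝ) := fun q =>
    (∑ u, (R q.1.1 (v q.1.2) u) • LinearMap.proj u) - LinearMap.proj q.1.2
  have hF : ∀ (q : I) (ω : κ → ℝ), F q ω = ∑ u, R q.1.1 (v q.1.2) u * ω u - ω q.1.2 := by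
    intro q ω; simp [F, LinearMap.sum_apply]
  obtain ⟨ω, hω⟩ := Module.Dual.exists_forall_ne_zero_of_forall_exists F (by
    intro q
    refine ⟨Pi.single q.1.2 1, ?_⟩
    rw [hF]
    simp [Pi.single_apply, (hR _ q.2.1).1 _ _ q.2.2])
  refine ⟨ω, fun B hB k hk h => hω ⟨(B, k), hB, hk⟩ ?_⟩
  rw [hF]; simp only; rw [h, sub_self]

def Good (v : κ → E) (R : Finset κ → E →ₗ[ℝ] (κ → ℝ)) (ω : κ → ℝ) (B : Finset κ) : Prop :=
  IsBas v B ∧ ∀ k, k ∉ B → ∑ u, R B (v k) u * ω u < ω k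

lemma good_le {v : κ → E} {R : Finset κ → E →ₗ[ℝ] (κ → ℝ)}
    (hR : ∀ B, IsBas v B → IsCoord v B (R B)) {ω : κ → ℝ} {B : Finset κ} (h : Good v R ω B)
    (k : κ) : ∑ u, R B (v k) u * ω u ≤ ω k := by
  by_cases hk : k ∈ B
  · rw [coord_self (hR B h.1) hk]; simp [Pi.single_apply]
  · exact (h.2 k hk).le

lemma good_cmp {v : κ → E} {R : Finset κ → E →ₗ[ℝ] (κ → ℝ)}
    (hR : ∀ B, IsBas v B → IsCoord v B (R B)) {ω : κ → ℝ} {B B' : Finset κ} (h : Good v R ω B)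
    (h' : Good v R ω B') {x : E} (hx : ∀ k ∈ B, 0 < R B x k) :
    ∑ u, R B' x u * ω u ≤ ∑ u, R B x u * ω u ∧
    (∑ u, R B' x u * ω u = ∑ u, R B x u * ω u → B ⊆ B') := by
  have e1 : ∑ u, R B' x u * ω u = ∑ k, R B x k * ∑ u, R B' (v k) u * ω u := by
    conv_lhs => rw [← (hR B h.1).2.1 x]
    simp only [map_sum, map_smul, Finset.sum_apply, Pi.smul_apply, smul_eq_mul, Finset.sum_mul,
      Finset.mul_sum]
    rw [Finset.sum_comm]
    simp only [mul_assoc]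
  have hx0 : ∀ k, 0 ≤ R B x k := fun k => by
    by_cases hk : k ∈ B
    · exact (hx k hk).le
    · rw [(hR B h.1).1 x k hk]
  have hle : ∀ k ∈ Finset.univ, R B x k * ∑ u, R B' (v k) u * ω u ≤ R B x k * ω k :=
    fun k _ => mul_le_mul_of_nonneg_left (good_le hR h' k) (hx0 k)
  refine ⟨e1 ▸ Finset.sum_le_sum hle, ?_⟩
  intro he k hk
  rw [e1, Finset.sum_eq_sum_iff_of_le hle] at he
  by_contra hk'
  have := mul_left_cancel₀ (hx k hk).ne' (he k (Finset.mem_univ k))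
  exact (h'.2 k hk').ne this

lemma good_disj {v : κ → E} {R : Finset κ → E →ₗ[ℝ] (κ → ℝ)}
    (hR : ∀ B, IsBas v B → IsCoord v B (R B)) {ω : κ → ℝ} {B B' : Finset κ} (h : Good v R ω B)
    (h' : Good v R ω B') {x : E} (hx : ∀ k ∈ B, 0 < R B x k) (hx' : ∀ k ∈ B', 0 < R B' x k) :
    B = B' := by
  obtain ⟨a, b⟩ := good_cmp hR h h' hx
  obtain ⟨a', b'⟩ := good_cmp hR h' h hx'
  exact Finset.Subset.antisymm (b (le_antisymm a a')) (b' (le_antisymm a' a))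

/-- perturbation -/
lemma perturb {v : κ → E} {B : Finset κ} {R : E →ₗ[ℝ] (κ → ℝ)} (hR : IsCoord v B R)
    (ω : κ → ℝ) (c : κ → ℝ) (hc : ∀ k, 0 ≤ c k) (hcB : ∀ k ∈ B, 0 < c k)
    (hmin : ∀ c' : κ → ℝ, (∀ k, 0 ≤ c' k) → ∑ k, c' k • v k = ∑ k, c k • v k →
      ∑ k, c k * ω k ≤ ∑ k, c' k * ω k) (k₀ : κ) (hk₀ : k₀ ∉ B) :
    ∑ u, R (v k₀) u * ω u ≤ ω k₀ ∧ (0 < c k₀ → ∑ u, R (v k₀) u * ω u = ω k₀) := by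
  let r : κ → ℝ := fun k => (Pi.single k₀ 1 : κ → ℝ) k - R (v k₀) k
  have hrv : ∑ k, r k • v k = 0 := by
    simp only [r, sub_smul, Finset.sum_sub_distrib, hR.2.1]
    simp [Pi.single_apply]
  have hrω : ∑ k, r k * ω k = ω k₀ - ∑ u, R (v k₀) u * ω u := by
    simp only [r, sub_mul, Finset.sum_sub_distrib]
    simp [Pi.single_apply]
  have key : ∀ τ : ℝ, (∀ k, 0 ≤ c k + τ * r k) → 0 ≤ τ * (ω k₀ - ∑ u, R (v k₀) u * ω u) := by
    intro τ hτ
    have := hmin (fun k => c k + τ * r k) hτ (by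
      simp only [add_smul, Finset.sum_add_distrib, mul_smul, ← Finset.smul_sum, hrv]; simp)
    simp only [add_mul, Finset.sum_add_distrib, mul_assoc, ← Finset.mul_sum, hrω] at this
    linarith
  have small : ∀ s : ℝ, (∀ k, c k = 0 → 0 ≤ s * r k) → ∃ τ > 0, ∀ k, 0 ≤ c k + (τ * s) * r k := by
    intro s hs
    have : ∀ k, ∀ᶠ τ in nhdsWithin (0:ℝ) (Set.Ioi 0), 0 ≤ c k + (τ * s) * r k := by
      intro k
      rcases (hc k).eq_or_lt with h | h
      · filter_upwards [self_mem_nhdsWithin] with τ hτ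
        have := hs k h.symm
        rw [← h, zero_add, mul_assoc]
        exact mul_nonneg (le_of_lt hτ) this
      · have hcont : Continuous (fun τ : ℝ => c k + (τ * s) * r k) := by fun_prop
        have := (hcont.tendsto 0).eventually (lt_mem_nhds (a := 0) (by simpa using h))
        filter_upwards [nhdsWithin_le_nhds this] with τ hτ using hτ.le
    obtain ⟨τ, h1, h2⟩ := ((Filter.eventually_all.2 this).and self_mem_nhdsWithin).exists
    exact ⟨τ, h2, h1⟩
  have hr : ∀ k, c k = 0 → 0 ≤ r k ∧ (0 < c k₀ → r k = 0) := by
    intro k hk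
    have hkB : k ∉ B := fun h => (hcB k h).ne' hk
    simp only [r, hR.1 _ k hkB, Pi.single_apply]
    constructor
    · split_ifs <;> simp
    · intro h; rw [if_neg]; simp; rintro rfl; exact h.ne' hk
  have h1 : ∑ u, R (v k₀) u * ω u ≤ ω k₀ := by
    obtain ⟨τ, hτ, h⟩ := small 1 (fun k hk => by simpa using (hr k hk).1)
    have := key _ h
    rw [mul_one] at this
    have := nonneg_of_mul_nonneg_right this hτ
    linarith
  refine ⟨h1, fun hpos => le_antisymm h1 ?_⟩
  obtain ⟨τ, hτ, h⟩ := small (-1) (fun k hk => by simp [(hr k hk).2 hpos])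
  have := key _ h
  rw [mul_assoc] at this
  have := nonneg_of_mul_nonneg_right this hτ
  linarith

def Gen (v : κ → E) (x : E) : Prop :=
  ∀ S : Finset κ, x ∈ Submodule.span ℝ (v '' (S : Set κ)) → Submodule.span ℝ (v '' (S : Set κ)) = ⊤

lemma gen_ne {v : κ → E} {B : Finset κ} (h : IsBas v B) {R : E →ₗ[ℝ] (κ → ℝ)} (hR : IsCoord v B R)
    {x : E} (hx : Gen v x) {k : κ} (hk : k ∈ B) : R x k ≠ 0 := by
  intro h0
  have h1 : x ∈ Submodule.span ℝ (v '' ((B.erase k : Finset κ) : Set κ)) := by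
    rw [← hR.2.1 x]
    refine Submodule.sum_mem _ fun j _ => ?_
    by_cases hj : j ∈ B.erase k
    · exact Submodule.smul_mem _ _ (Submodule.subset_span ⟨j, hj, rfl⟩)
    · have : R x j = 0 := by
        by_cases hjk : j = k
        · rw [hjk, h0]
        · exact hR.1 _ _ (fun hB => hj (Finset.mem_erase.2 ⟨hjk, hB⟩))
      simp [this]
  have h2 := hx _ h1
  have h3 := h.1.notMem_span (i := k) hk
  rw [Finset.coe_erase] at h2
  rw [h2] at h3
  exact h3 trivial

lemma cover {v : κ → E} [FiniteDimensional ℝ E] {R : Finset κ → E →ₗ[ℝ] (κ → ℝ)}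
    (hR : ∀ B, IsBas v B → IsCoord v B (R B)) {ω : κ → ℝ}
    (hω : ∀ B, IsBas v B → ∀ k, k ∉ B → ∑ u, R B (v k) u * ω u ≠ ω k)
    (ht : E →ₗ[ℝ] ℝ) (hht : ∀ k, ht (v k) = 1) (x : E) (hx : Gen v x)
    (hxc : ∃ c : κ → ℝ, (∀ k, 0 ≤ c k) ∧ ∑ k, c k • v k = x) :
    ∃ B, Good v R ω B ∧ ∀ k ∈ B, 0 < R B x k := by
  -- minimizer
  let T : (κ → ℝ) →ₗ[ℝ] E := Fintype.linearCombination ℝ v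
  have hT : ∀ c, T c = ∑ k, c k • v k := fun c => by simp [T, Fintype.linearCombination_apply]
  let K : Set (κ → ℝ) := {c | (∀ k, 0 ≤ c k) ∧ ∑ k, c k • v k = x}
  have hsumK : ∀ c ∈ K, ∑ k, c k = ht x := by
    rintro c ⟨_, hc⟩; rw [← hc]; simp [hht]
  have hKc : IsCompact K := by
    have hbdd : Bornology.IsBounded K := by
      refine (Metric.isBounded_Icc (0 : κ → ℝ) (fun _ => ht x)).subset ?_
      intro c hc
      refine ⟨fun k => hc.1 k, fun k => ?_⟩
      rw [← hsumK c hc]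
      exact Finset.single_le_sum (f := c) (fun i _ => hc.1 i) (Finset.mem_univ k)
    have hclosed : IsClosed K := by
      have h1 : IsClosed {c : κ → ℝ | ∀ k, 0 ≤ c k} := by
        simp only [Set.ofPred_forall]
        exact isClosed_iInter fun k => isClosed_le continuous_const (continuous_apply k)
      obtain ⟨c₀, hc₀⟩ := hxc
      have h2 : IsClosed {c : κ → ℝ | T (c - c₀) = 0} :=
        (LinearMap.ker T).closed_of_finiteDimensional.preimage (continuous_id.sub continuous_const)
      convert h1.inter h2 using 1
      ext c
      change (_ ∧ _) ↔ (_ ∧ T (c - c₀) = 0)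
      rw [map_sub, hT, hT, hc₀.2, sub_eq_zero]
      rfl
    exact Metric.isCompact_of_isClosed_isBounded hclosed hbdd
  obtain ⟨c, hcK, hcmin⟩ := hKc.exists_isMinOn (f := fun c => ∑ k, c k * ω k) hxc
    (by fun_prop)
  let S : Set κ := {k | 0 < c k}
  have hS : Submodule.span ℝ (v '' S) = ⊤ := by
    have := hx (Finset.univ.filter (fun k => 0 < c k)) (by
      rw [← hcK.2]
      refine Submodule.sum_mem _ fun j _ => ?_
      rcases (hcK.1 j).eq_or_lt with h | h
      · simp [← h]
      · exact Submodule.smul_mem _ _ (Submodule.subset_span ⟨j, by simpa using h, rfl⟩))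
    simpa [S] using this
  obtain ⟨B', hB'S, -, hB'1, hB'2⟩ := exists_linearIndepOn_extension (K := ℝ) (v := v)
    (linearIndepOn_empty ℝ v) (Set.empty_subset S)
  let B : Finset κ := B'.toFinset
  have hBB : (B : Set κ) = B' := by simp [B]
  have hbas : IsBas v B := by
    refine ⟨by rw [hBB]; exact hB'2, ?_⟩
    rw [hBB, eq_top_iff, ← hS]
    exact Submodule.span_le.2 hB'1
  have hcB : ∀ k ∈ B, 0 < c k := fun k hk => hB'S (by rw [← hBB]; exact hk)
  have hp := perturb (hR B hbas) ω c hcK.1 hcB (fun c' h1 h2 => hcmin ⟨h1, h2.trans hcK.2⟩)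
  have hgood : Good v R ω B :=
    ⟨hbas, fun k hk => lt_of_le_of_ne (hp k hk).1 (hω B hbas k hk)⟩
  have hc0 : ∀ k, k ∉ B → c k = 0 := by
    intro k hk
    by_contra h
    exact hω B hbas k hk ((hp k hk).2 (lt_of_le_of_ne (hcK.1 k) (Ne.symm h)))
  refine ⟨B, hgood, fun k hk => ?_⟩
  rw [← hcK.2, (hR B hbas).2.2 c hc0]
  exact hcB k hk

end part1
end LD


namespace LD
section part2
open MeasureTheory Matrix
variable {ι : Type*} [Fintype ι]

def Del (ι : Type*) [Fintype ι] : Set (ι → ℝ) := {c | (∀ i, 0 < c i) ∧ ∑ i, c i < 1}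

lemma measurable_Del : MeasurableSet (Del ι) := by
  have h1 : IsOpen {c : ι → ℝ | ∀ i, 0 < c i} := by
    simp only [Set.ofPred_forall]
    exact isOpen_iInter_of_finite fun k => isOpen_lt continuous_const (continuous_apply k)
  have h2 : IsOpen {c : ι → ℝ | ∑ i, c i < 1} := isOpen_lt (by fun_prop) continuous_const
  exact (h1.inter h2).measurableSet

lemma vol_Del : volume (Del ι) ≤ ENNReal.ofReal (1 / (Fintype.card ι).factorial) := by
  let ε : (ι → Bool) → ι → ℝ := fun s i => if s i then 1 else -1
  have hε : ∀ s i, ε s i = 1 ∨ ε s i = -1 := by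
    intro s i; simp only [ε]; split_ifs <;> simp
  let f : (ι → Bool) → (ι → ℝ) →ₗ[ℝ] (ι → ℝ) := fun s => Matrix.toLin' (Matrix.diagonal (ε s))
  have hf : ∀ s x i, f s x i = ε s i * x i := by
    intro s x i; simp [f, Matrix.mulVec_diagonal]
  have hdet : ∀ s, |LinearMap.det (f s)| = 1 := by
    intro s
    simp only [f, LinearMap.det_toLin', Matrix.det_diagonal, Finset.abs_prod]
    apply Finset.prod_eq_one
    intro i _
    rcases hε s i with h | h <;> simp [h]
  have hvol : ∀ s, volume (f s ⁻¹' Del ι) = volume (Del ι) := by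
    intro s
    have h0 : LinearMap.det (f s) ≠ 0 := by
      intro h; have := hdet s; rw [h] at this; simp at this
    rw [Measure.addHaar_preimage_linearMap _ h0, abs_inv, hdet]
    simp
  have hmeas : ∀ s, MeasurableSet (f s ⁻¹' Del ι) := fun s =>
    measurable_Del.preimage (LinearMap.continuous_of_finiteDimensional (f s)).measurable
  have hdisj : Pairwise (Function.onFun Disjoint fun s => f s ⁻¹' Del ι) := by
    intro s s' hss
    rw [Function.onFun, Set.disjoint_left]
    intro x hx hx'
    apply hss
    funext i
    have h1 := hx.1 i
    have h2 := hx'.1 i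
    rw [hf] at h1 h2
    simp only [ε] at h1 h2
    by_cases a : s i <;> by_cases b : s' i <;> simp [a, b] at h1 h2 ⊢ <;> linarith
  have hsub : (⋃ s, f s ⁻¹' Del ι) ⊆ {x : ι → ℝ | ∑ i, |x i| ^ (1:ℝ) < 1} := by
    intro x hx
    obtain ⟨s, hs⟩ := Set.mem_iUnion.1 hx
    change ∑ i, |x i| ^ (1:ℝ) < 1
    simp only [Real.rpow_one]
    have : ∀ i, |x i| = f s x i := by
      intro i
      have h1 := hs.1 i
      rw [hf] at h1 ⊢
      rw [← abs_of_pos h1, abs_mul]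
      rcases hε s i with h | h <;> simp [h]
    simp only [this]
    exact hs.2
  have h := measure_mono (μ := volume) hsub
  rw [measure_iUnion hdisj hmeas, MeasureTheory.volume_sum_rpow_lt_one ι le_rfl] at h
  simp only [hvol, tsum_fintype, Finset.sum_const, Finset.card_univ, Fintype.card_fun, Fintype.card_bool, nsmul_eq_mul] at h
  have e : (2 * Real.Gamma (1 / 1 + 1)) ^ Fintype.card ι / Real.Gamma ((Fintype.card ι : ℝ) / 1 + 1)
     = 2 ^ Fintype.card ι * (1 / (Fintype.card ι).factorial) := by
    rw [div_one, div_one, Real.Gamma_nat_eq_factorial, one_add_one_eq_two, Real.Gamma_two]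
    ring
  rw [e, ENNReal.ofReal_mul (by positivity)] at h
  have e2 : ENNReal.ofReal (2 ^ Fintype.card ι) = ((2 ^ Fintype.card ι : ℕ) : ENNReal) := by
    rw [← ENNReal.ofReal_natCast]; simp
  rw [e2] at h
  exact (ENNReal.mul_le_mul_iff_right (by simp) (by simp)).1 h

def rl (z : ι → ℤ) : ι → ℝ := fun j => (z j : ℝ)

lemma vol_simplex (b : ι → ι → ℤ) :
    volume ((fun c : ι → ℝ => ∑ i, c i • rl (b i)) '' Del ι) ≤
      ENNReal.ofReal ((Matrix.of b).det.natAbs / (Fintype.card ι).factorial) := by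
  let f : (ι → ℝ) →ₗ[ℝ] (ι → ℝ) := Matrix.toLin' ((Matrix.of b).map (Int.cast : ℤ → ℝ))ᵀ
  have hf : (fun c : ι → ℝ => ∑ i, c i • rl (b i)) = f := by
    funext c j
    simp [f, Matrix.mulVec, dotProduct, rl, mul_comm]
  have hdet : LinearMap.det f = ((Matrix.of b).det : ℝ) := by
    simp only [f, LinearMap.det_toLin', Matrix.det_transpose]
    exact (Int.cast_det (R := ℝ) (Matrix.of b)).symm
  rw [hf, Measure.addHaar_image_linearMap, hdet]
  refine (mul_le_mul_right vol_Del _).trans ?_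
  rw [← ENNReal.ofReal_mul (abs_nonneg _)]
  apply ENNReal.ofReal_le_ofReal
  rw [← Int.cast_abs, Int.abs_eq_natAbs]
  apply le_of_eq
  simp [div_eq_mul_inv]

lemma rl_inj {z z' : ι → ℤ} (h : rl z = rl z') : z = z' := by
  funext j; have := congrFun h j; simpa [rl] using this

lemma rl_add (z z' : ι → ℤ) : rl (z + z') = rl z + rl z' := by
  funext j; simp [rl]
lemma rl_sub (z z' : ι → ℤ) : rl (z - z') = rl z - rl z' := by
  funext j; simp [rl]
lemma rl_sum {κ : Type*} (s : Finset κ) (n : κ → ℤ) (b : κ → ι → ℤ) :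
    rl (∑ i ∈ s, n i • b i) = ∑ i ∈ s, (n i : ℝ) • rl (b i) := by
  funext j; simp [rl]

lemma count_simplex (b : ι → ι → ℤ) (hb : LinearIndependent ℝ (fun i => rl (b i)))
    (i₀ : ι) (hb1 : ∀ i, b i i₀ = 1) (σ : ι → Prop) (hσ : ∃ i, σ i) (lam : ℕ)
    (hlam : Fintype.card ι ≤ lam + 1) :
    ∃ Z : Finset (ι → ℤ), (Matrix.of b).det.natAbs * (lam + 1).choose (Fintype.card ι) ≤ Z.card ∧
      ∀ z ∈ Z, z i₀ ≤ lam ∧ ∃ c : ι → ℝ, (∀ i, 0 < c i ∨ (c i = 0 ∧ σ i)) ∧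
        ∑ i, c i • rl (b i) = rl z := by
  obtain ⟨r, hr⟩ : ∃ r, lam + 1 = Fintype.card ι + r := ⟨_, (Nat.add_sub_cancel' hlam).symm⟩
  have hbZ : LinearIndependent ℤ b := by
    rw [Fintype.linearIndependent_iff] at hb ⊢
    intro g hg i
    have := hb (fun i => (g i : ℝ)) (by rw [← rl_sum, hg]; funext j; simp [rl]) i
    exact_mod_cast this
  let N : Submodule ℤ (ι → ℤ) := Submodule.span ℤ (Set.range b)
  let bN : Module.Basis ι ℤ N := Module.Basis.span hbZ
  have hbN : ∀ i, (bN i : ι → ℤ) = b i := fun i => by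
    simp only [bN, Module.Basis.span_apply hbZ i]
  have hcard : (Matrix.of b).det.natAbs = Nat.card ((ι → ℤ) ⧸ N) := by
    rw [← Submodule.natAbs_det_basis_change (Pi.basisFun ℤ ι) N bN, Module.Basis.det_apply,
      ← Matrix.det_transpose]
    congr 2
    ext i j
    simp [Module.Basis.toMatrix_apply, hbN]
  have hdet0 : (Matrix.of b).det ≠ 0 := by
    intro h
    have h1 := (Matrix.linearIndependent_rows_iff_isUnit (A := (Matrix.of b).map (Int.cast : ℤ → ℝ))).1 hb
    rw [Matrix.isUnit_iff_isUnit_det, isUnit_iff_ne_zero] at h1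
    apply h1
    have := Int.cast_det (R := ℝ) (Matrix.of b)
    rw [h] at this
    rw [← Int.cast_zero]; exact this.symm
  have : Finite ((ι → ℤ) ⧸ N) := Nat.finite_of_card_ne_zero (by
    rw [← hcard]; simpa using hdet0)
  let _ : Fintype ((ι → ℤ) ⧸ N) := Fintype.ofFinite _
  let bR : Module.Basis ι ℝ (ι → ℝ) := basisOfLinearIndependentOfCardEqFinrank' _ hb (by simp)
  have hbR : ∀ i, bR i = rl (b i) := fun i => by simp [bR]
  have hrep : ∀ q : (ι → ℤ) ⧸ N, ∃ z : ι → ℤ, (Submodule.Quotient.mk z : (ι → ℤ) ⧸ N) = q ∧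
      ∃ c : ι → ℝ, (∀ i, (0 < c i ∨ (c i = 0 ∧ σ i)) ∧ (c i ≤ 1) ∧ (σ i → c i < 1)) ∧
        ∑ i, c i • rl (b i) = rl z := by
    intro q
    obtain ⟨z, rfl⟩ := Submodule.Quotient.mk_surjective N q
    let c := bR.repr (rl z)
    let n : ι → ℤ := fun i => if σ i then ⌊c i⌋ else ⌈c i⌉ - 1
    refine ⟨z - ∑ i, n i • b i, ?_, fun i => c i - n i, ?_, ?_⟩
    · rw [Submodule.Quotient.eq]
      simp only [sub_sub_cancel_left]
      exact N.neg_mem (N.sum_mem fun i _ => N.smul_mem _ (Submodule.subset_span ⟨i, rfl⟩))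
    · intro i
      by_cases h : σ i
      · simp only [n, h, if_true, and_true]
        have h1 := Int.floor_le (c i)
        have h2 := Int.lt_floor_add_one (c i)
        refine ⟨?_, by linarith, fun _ => by linarith⟩
        rcases h1.lt_or_eq with h | h
        · left; linarith
        · right; linarith
      · simp only [n, h, if_false, and_false, or_false]
        have h1 := Int.le_ceil (c i)
        have h2 := Int.ceil_lt_add_one (c i)
        push_cast
        refine ⟨by linarith, by linarith, fun h => h.elim⟩
    · rw [rl_sub, rl_sum]
      simp only [sub_smul, Finset.sum_sub_distrib]
      congr 1
      simp only [← hbR]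
      exact bR.sum_repr _
  choose rep hrepq crep hcrep hcsum using hrep
  let cnt : Sym (Option ι) r → ι → ℤ := fun s i => ((Multiset.count (some i) (s : Multiset (Option ι)) : ℕ) : ℤ)
  have hcnt_sum : ∀ s : Sym (Option ι) r,
      (∑ i, Multiset.count (some i) (s : Multiset (Option ι))) + Multiset.count none (s : Multiset (Option ι)) = r := by
    intro s
    have := Multiset.sum_count_eq_card (s := Finset.univ) (m := (s : Multiset (Option ι))) (by simp)
    rw [Fintype.sum_option, Sym.card_coe] at this
    omega
  have hcnt_inj : Function.Injective cnt := by
    intro s s' h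
    have h1 : ∀ i, Multiset.count (some i) (s : Multiset (Option ι)) = Multiset.count (some i) (s' : Multiset (Option ι)) := by
      intro i; have := congrFun h i; simpa [cnt] using this
    apply Sym.coe_injective
    ext o
    rcases o with _ | i
    · have a := hcnt_sum s
      have b := hcnt_sum s'
      simp only [h1] at a
      omega
    · exact h1 i
  let g : ((ι → ℤ) ⧸ N) × Sym (Option ι) r → (ι → ℤ) := fun p => rep p.1 + ∑ i, cnt p.2 i • b i
  have hg : Function.Injective g := by
    rintro ⟨q, s⟩ ⟨q', s'⟩ h
    have hmk : ∀ q s, (Submodule.Quotient.mk (g (q, s)) : (ι → ℤ) ⧸ N) = q := by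
      intro q s
      conv_rhs => rw [← hrepq q]
      rw [Submodule.Quotient.eq]
      simp only [g, add_sub_cancel_left]
      exact (N.sum_mem fun i _ => N.smul_mem _ (Submodule.subset_span ⟨i, rfl⟩))
    have hq : q = q' := by rw [← hmk q s, h, hmk]
    subst hq
    have h2 : ∑ i, cnt s i • b i = ∑ i, cnt s' i • b i := by simpa [g] using h
    have : cnt s = cnt s' := by
      rw [Fintype.linearIndependent_iff] at hbZ
      funext i
      have := hbZ (fun i => cnt s i - cnt s' i) (by simp only [sub_smul, Finset.sum_sub_distrib, h2, sub_self]) i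
      simpa [sub_eq_zero] using this
    rw [hcnt_inj this]
  refine ⟨Finset.univ.image g, ?_, ?_⟩
  · rw [Finset.card_image_of_injective _ hg, Finset.card_univ, Fintype.card_prod, hcard,
      Nat.card_eq_fintype_card, Sym.card_sym_eq_choose, Fintype.card_option]
    apply le_of_eq
    congr 1
    rw [hr, show Fintype.card ι + 1 + r - 1 = Fintype.card ι + r by omega]
    exact Nat.choose_symm_add
  · intro z hz
    obtain ⟨⟨q, s⟩, -, rfl⟩ := Finset.mem_image.1 hz
    have hcoord : ∑ i, (crep q i + cnt s i) • rl (b i) = rl (g (q, s)) := by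
      simp only [g, rl_add, rl_sum, add_smul, Finset.sum_add_distrib, hcsum]
    refine ⟨?_, fun i => crep q i + cnt s i, ?_, hcoord⟩
    · have h1 : ∑ i, crep q i = (rep q i₀ : ℝ) := by
        have := congrFun (hcsum q) i₀
        simpa [rl, hb1] using this
      have h2 : ∑ i, crep q i < Fintype.card ι := by
        obtain ⟨i, hi⟩ := hσ
        have := Finset.sum_lt_sum (s := Finset.univ) (f := crep q) (g := fun _ => (1:ℝ))
          (fun i _ => (hcrep q i).2.1) ⟨i, Finset.mem_univ i, (hcrep q i).2.2 hi⟩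
        simpa using this
      have h3 : rep q i₀ < Fintype.card ι := by rw [h1] at h2; exact_mod_cast h2
      have h4 : ∑ i, cnt s i ≤ r := by
        have := hcnt_sum s
        have h5 : ∑ i, Multiset.count (some i) (s : Multiset (Option ι)) ≤ r := by omega
        simp only [cnt]
        exact_mod_cast h5
      have h6 : g (q, s) i₀ = rep q i₀ + ∑ i, cnt s i := by
        simp [g, hb1]
      rw [h6]
      omega
    · intro i
      have h0 : (0:ℝ) ≤ cnt s i := by simp [cnt]
      rcases (hcrep q i).1 with h | ⟨h, hs⟩
      · left; linarith
      · rcases h0.lt_or_eq with h' | h'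
        · left; linarith
        · right; exact ⟨by simp [h, ← h'], hs⟩

end part2
end LD


namespace LD
section part3
open MeasureTheory
variable {ι κ : Type*} [Fintype ι] [Fintype κ]

lemma bas_card {v : κ → ι → ℝ} {B : Finset κ} (h : IsBas v B) : Fintype.card ι = Fintype.card B := by
  obtain ⟨h1, h2⟩ := h
  let b : Module.Basis B ℝ (ι → ℝ) := Module.Basis.mk (v := fun k : B => v k) h1 (by
    rw [← h2, Set.image_eq_range]; rfl)
  have := Module.finrank_eq_card_basis b
  simpa using this

lemma sum_equiv_B {E : Type*} [AddCommGroup E] {B : Finset κ} (e : ι ≃ B) (F : κ → E)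
    (hF : ∀ k, k ∉ B → F k = 0) : ∑ k, F k = ∑ i, F (e i) := by
  rw [e.sum_comp (fun k : B => F k), Finset.sum_coe_sort B F]
  symm
  exact Finset.sum_subset (Finset.subset_univ _) (fun k _ hk => hF k hk)

lemma gen_ae (v : κ → ι → ℝ) : ∀ᵐ x : ι → ℝ, Gen v x := by
  have : ∀ S : Finset κ, ∀ᵐ x : ι → ℝ, (x ∈ Submodule.span ℝ (v '' (S : Set κ)) →
      Submodule.span ℝ (v '' (S : Set κ)) = ⊤) := by
    intro S
    by_cases h : Submodule.span ℝ (v '' (S : Set κ)) = ⊤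
    · exact Filter.Eventually.of_forall fun x _ => h
    · have h0 := Measure.addHaar_submodule volume _ h
      filter_upwards [measure_eq_zero_iff_ae_notMem.1 h0] with x hx hx'
      exact (hx hx').elim
  exact ae_all_iff.2 this

lemma exists_gen_pos (v : κ → ι → ℝ) (i₀ : ι) : ∃ w, Gen v w ∧ 0 < w i₀ := by
  have h : (∀ᵐ x : ι → ℝ, Gen v x) := gen_ae v
  have hne : (LinearMap.ker (LinearMap.proj i₀ : (ι → ℝ) →ₗ[ℝ] ℝ)) ≠ ⊤ := by
    intro h
    have : (fun _ => (1:ℝ)) ∈ (LinearMap.ker (LinearMap.proj i₀ : (ι → ℝ) →ₗ[ℝ] ℝ)) := by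
      rw [h]; trivial
    simp at this
  have h2 := measure_eq_zero_iff_ae_notMem.1 (Measure.addHaar_submodule (volume : Measure (ι → ℝ)) _ hne)
  obtain ⟨w, h1, h2⟩ := (h.and h2).exists
  have h3 : w i₀ ≠ 0 := by simpa using h2
  rcases lt_or_gt_of_ne h3 with h | h
  · refine ⟨-w, fun S hS => h1 S (by simpa using hS), by simpa using h⟩
  · exact ⟨w, h1, h⟩

theorem cone_count (v : κ → ι → ℤ) (i₀ : ι) (hv : ∀ k, v k i₀ = 1) (lam : ℕ)
    (hlam : Fintype.card ι ≤ lam + 1) :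
    ∃ Z : Finset (ι → ℤ), (∀ z ∈ Z, z i₀ ≤ lam ∧
        ∃ c : κ → ℝ, (∀ k, 0 ≤ c k) ∧ ∑ k, c k • rl (v k) = rl z) ∧
      volume {x : ι → ℝ | (∃ c : κ → ℝ, (∀ k, 0 ≤ c k) ∧ ∑ k, c k • rl (v k) = x) ∧ x i₀ < 1} ≤
        ENNReal.ofReal (Z.card / ((Fintype.card ι).factorial * (lam + 1).choose (Fintype.card ι))) := by
  let u : κ → ι → ℝ := fun k => rl (v k)
  have hRex : ∀ B, ∃ R : (ι → ℝ) →ₗ[ℝ] (κ → ℝ), IsBas u B → IsCoord u B R := by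
    intro B
    by_cases h : IsBas u B
    · obtain ⟨R, hR⟩ := exists_coord h
      exact ⟨R, fun _ => hR⟩
    · exact ⟨0, fun h' => (h h').elim⟩
  choose R hR using hRex
  obtain ⟨ω, hω⟩ := exists_generic u R hR
  obtain ⟨w, hwg, hw⟩ := exists_gen_pos u i₀
  have hu1 : ∀ k, u k i₀ = 1 := fun k => by simp [u, rl, hv]
  have hht : ∀ B, IsBas u B → ∀ x, ∑ k, R B x k = x i₀ := by
    intro B hB x
    have := congrFun ((hR B hB).2.1 x) i₀
    simpa [hu1] using this
  let G : Finset (Finset κ) := Finset.univ.filter (Good u R ω)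
  -- per-basis data
  have hdata : ∀ B, ∃ (Z : Finset (ι → ℤ)), Good u R ω B →
      (∀ z ∈ Z, z i₀ ≤ lam ∧ ∀ k ∈ B, 0 < R B (rl z) k ∨ (R B (rl z) k = 0 ∧ 0 < R B w k)) ∧
      volume {x : ι → ℝ | x i₀ < 1 ∧ ∀ k ∈ B, 0 < R B x k} ≤
        ENNReal.ofReal (Z.card / ((Fintype.card ι).factorial * (lam + 1).choose (Fintype.card ι))) := by
    intro B
    by_cases hG : Good u R ω B
    swap
    · exact ⟨∅, fun h => (hG h).elim⟩
    have hB := hG.1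
    let e : ι ≃ B := Fintype.equivOfCardEq (bas_card hB)
    let b : ι → ι → ℤ := fun i => v (e i)
    have hb : LinearIndependent ℝ (fun i => rl (b i)) := by
      have := hB.1
      exact LinearIndependent.comp (v := fun k : B => u k) this e e.injective
    have hRsum : ∀ x, ∑ i, R B x (e i) • rl (b i) = x := by
      intro x
      rw [← sum_equiv_B e (fun k => R B x k • u k) (fun k hk => by simp [(hR B hB).1 x k hk])]
      exact (hR B hB).2.1 x
    obtain ⟨Z, hZc, hZ⟩ := count_simplex b hb i₀ (fun i => hv _) (fun i => 0 < R B w (e i)) (by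
      by_contra hcon
      push Not at hcon
      have h1 := hht B hB w
      rw [sum_equiv_B e (fun k => R B w k) (fun k hk => (hR B hB).1 w k hk)] at h1
      have := Finset.sum_nonpos (s := Finset.univ) (fun i _ => hcon i)
      linarith) lam hlam
    refine ⟨Z, fun _ => ⟨fun z hz => ⟨(hZ z hz).1, fun k hk => ?_⟩, ?_⟩⟩
    · obtain ⟨c, hc, hcs⟩ := (hZ z hz).2
      have hz : ∀ i, R B (rl z) (e i) = c i := by
        intro i
        rw [Fintype.linearIndependent_iff] at hb
        have := hb (fun i => R B (rl z) (e i) - c i) (by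
          simp only [sub_smul, Finset.sum_sub_distrib, hRsum, hcs, sub_self]) i
        simpa [sub_eq_zero] using this
      have := hc (e.symm ⟨k, hk⟩)
      rw [← hz] at this
      simpa using this
    · have hsub : {x : ι → ℝ | x i₀ < 1 ∧ ∀ k ∈ B, 0 < R B x k} ⊆
          (fun c : ι → ℝ => ∑ i, c i • rl (b i)) '' Del ι := by
        rintro x ⟨hx1, hx2⟩
        refine ⟨fun i => R B x (e i), ⟨fun i => hx2 _ (e i).2, ?_⟩, hRsum x⟩
        rw [← sum_equiv_B e (fun k => R B x k) (fun k hk => (hR B hB).1 x k hk), hht B hB]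
        exact hx1
      refine (measure_mono hsub).trans ((vol_simplex b).trans ?_)
      apply ENNReal.ofReal_le_ofReal
      have hch : 0 < (lam + 1).choose (Fintype.card ι) := Nat.choose_pos hlam
      rw [div_le_div_iff₀ (by positivity) (by positivity)]
      have : ((Matrix.of b).det.natAbs : ℝ) * (lam + 1).choose (Fintype.card ι) ≤ Z.card := by
        exact_mod_cast hZc
      nlinarith [(Nat.cast_nonneg (Fintype.card ι).factorial : (0:ℝ) ≤ _)]
  choose Zf hZf using hdata
  have hGm : ∀ B, B ∈ G ↔ Good u R ω B := fun B => by simp [G]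
  have hdisj : (G : Set (Finset κ)).PairwiseDisjoint Zf := by
    intro B hB B' hB' hne
    rw [Function.onFun, Finset.disjoint_left]
    intro z hz hz'
    have hB := (hGm B).1 hB
    have hB' := (hGm B').1 hB'
    apply hne
    have hev : ∀ B, Good u R ω B → z ∈ Zf B → ∀ᶠ τ in nhdsWithin (0:ℝ) (Set.Ioi 0),
        ∀ k ∈ B, 0 < R B (rl z + τ • w) k := by
      intro B hB hz
      have := ((hZf B hB).1 z hz).2
      rw [Filter.eventually_all_finset]
      intro k hk
      simp only [map_add, map_smul, Pi.add_apply, Pi.smul_apply, smul_eq_mul]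
      rcases this k hk with h | ⟨h, h'⟩
      · have hcont : Continuous (fun τ : ℝ => R B (rl z) k + τ * R B w k) := by fun_prop
        have := (hcont.tendsto 0).eventually (lt_mem_nhds (a := 0) (by simpa using h))
        exact nhdsWithin_le_nhds this
      · filter_upwards [self_mem_nhdsWithin] with τ hτ
        rw [h, zero_add]
        exact mul_pos hτ h'
    obtain ⟨τ, h1, h2⟩ := ((hev B hB hz).and (hev B' hB' hz')).exists
    exact good_disj hR hB hB' h1 h2
  refine ⟨G.biUnion Zf, ?_, ?_⟩
  · intro z hz
    obtain ⟨B, hB, hz⟩ := Finset.mem_biUnion.1 hz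
    have hB := (hGm B).1 hB
    obtain ⟨h1, h2⟩ := (hZf B hB).1 z hz
    refine ⟨h1, R B (rl z), fun k => ?_, (hR B hB.1).2.1 _⟩
    by_cases hk : k ∈ B
    · rcases h2 k hk with h | h
      · exact h.le
      · exact h.1.ge
    · exact ((hR B hB.1).1 _ k hk).ge
  · rw [Finset.card_biUnion hdisj]
    calc _ ≤ volume (⋃ B ∈ G, {x : ι → ℝ | x i₀ < 1 ∧ ∀ k ∈ B, 0 < R B x k}) := by
          apply measure_mono_ae
          filter_upwards [gen_ae u] with x hx hxK
          obtain ⟨hxc, hx1⟩ := hxK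
          obtain ⟨B, hB, hpos⟩ := cover hR hω (LinearMap.proj i₀) (fun k => hu1 k) x hx hxc
          exact Set.mem_biUnion ((hGm B).2 hB) ⟨hx1, hpos⟩
      _ ≤ ∑ B ∈ G, volume {x : ι → ℝ | x i₀ < 1 ∧ ∀ k ∈ B, 0 < R B x k} :=
          measure_biUnion_finset_le _ _
      _ ≤ ∑ B ∈ G, ENNReal.ofReal ((Zf B).card / ((Fintype.card ι).factorial * (lam + 1).choose (Fintype.card ι))) :=
          Finset.sum_le_sum fun B hB => (hZf B ((hGm B).1 hB)).2
      _ = _ := by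
          rw [← ENNReal.ofReal_sum_of_nonneg (fun _ _ => by positivity), ← Finset.sum_div]
          push_cast
          rfl

end part3
end LD


namespace LD
section part4
open MeasureTheory

lemma choose_lower (k : ℕ) : ∀ n : ℕ, k ≤ n → ((n : ℝ) / k) ^ k ≤ n.choose k := by
  induction k with
  | zero => intro n _; simp
  | succ k ih =>
    intro n hn
    obtain ⟨n, rfl⟩ : ∃ n', n = n' + 1 := ⟨n - 1, by omega⟩
    have hkn : k ≤ n := by omega
    have h1 : ((n + 1 : ℕ) : ℝ) * n.choose k = (n + 1).choose (k + 1) * ((k + 1 : ℕ) : ℝ) := by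
      exact_mod_cast Nat.add_one_mul_choose_eq n k
    have h2 : (((n + 1 : ℕ) : ℝ) / (k + 1 : ℕ)) ^ k ≤ n.choose k := by
      refine le_trans ?_ (ih n hkn)
      rcases Nat.eq_zero_or_pos k with rfl | hk
      · simp
      apply pow_le_pow_left₀ (by positivity)
      rw [div_le_div_iff₀ (by positivity) (by positivity)]
      push_cast
      have : (k : ℝ) ≤ n := by exact_mod_cast hkn
      nlinarith
    have h3 : ((n + 1).choose (k + 1) : ℝ) = ((n + 1 : ℕ) : ℝ) / (k + 1 : ℕ) * n.choose k := by
      have : ((k + 1 : ℕ) : ℝ) ≠ 0 := by positivity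
      field_simp
      linarith
    rw [h3, pow_succ']
    exact mul_le_mul_of_nonneg_left h2 (by positivity)

lemma cone_mem {E κ : Type*} [AddCommGroup E] [Module ℝ E] [Fintype κ] {P : Set E} (hP : Convex ℝ P)
    (hne : P.Nonempty) (c : κ → ℝ) (hc : ∀ k, 0 ≤ c k) (v : κ → E) (hv : ∀ k, v k ∈ P) :
    ∑ k, c k • v k ∈ (∑ k, c k) • P := by
  rcases (Finset.sum_nonneg (s := Finset.univ) fun k _ => hc k).eq_or_lt with h | h
  · rw [← h]
    have h0 := (Finset.sum_eq_zero_iff_of_nonneg (fun k _ => hc k)).1 h.symm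
    rw [Finset.sum_eq_zero (fun k hk => by rw [h0 k hk, zero_smul]), Set.zero_smul_set hne]
    rfl
  · refine ⟨Finset.univ.centerMass c v, hP.centerMass_mem (fun k _ => hc k) h (fun k _ => hv k), ?_⟩
    simp only [Finset.centerMass]
    rw [smul_smul, mul_inv_cancel₀ h.ne', one_smul]

lemma vol_cone (m : ℕ) (P : Set (Fin m → ℝ)) (hPc : IsCompact P) (i₀ : Fin (m + 1)) :
    ENNReal.ofReal ((volume P).toReal / (m + 1)) ≤
      volume {x : Fin (m + 1) → ℝ | 0 < x i₀ ∧ x i₀ < 1 ∧ i₀.removeNth x ∈ x i₀ • P} := by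
  let T : Set (ℝ × (Fin m → ℝ)) := {q | q.1 ∈ Set.Ioo (0:ℝ) 1 ∧ q.1⁻¹ • q.2 ∈ P}
  have hT : MeasurableSet T := by
    have h1 : MeasurableSet {q : ℝ × (Fin m → ℝ) | q.1 ∈ Set.Ioo (0:ℝ) 1} :=
      measurableSet_Ioo.preimage measurable_fst
    have h2 : MeasurableSet {q : ℝ × (Fin m → ℝ) | q.1⁻¹ • q.2 ∈ P} :=
      hPc.measurableSet.preimage (by fun_prop)
    exact h1.inter h2
  have e1 : {x : Fin (m + 1) → ℝ | 0 < x i₀ ∧ x i₀ < 1 ∧ i₀.removeNth x ∈ x i₀ • P} =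
      MeasurableEquiv.piFinSuccAbove (fun _ => ℝ) i₀ ⁻¹' T := by
    ext x
    change _ ↔ ((0 < x i₀ ∧ x i₀ < 1) ∧ (x i₀)⁻¹ • i₀.removeNth x ∈ P)
    constructor
    · rintro ⟨a, b, c⟩
      exact ⟨⟨a, b⟩, (Set.mem_smul_set_iff_inv_smul_mem₀ a.ne' _ _).1 c⟩
    · rintro ⟨⟨a, b⟩, c⟩
      exact ⟨a, b, (Set.mem_smul_set_iff_inv_smul_mem₀ a.ne' _ _).2 c⟩
  rw [e1, (volume_preserving_piFinSuccAbove (fun _ => ℝ) i₀).measure_preimage hT.nullMeasurableSet]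
  rw [Measure.volume_eq_prod, Measure.prod_apply hT]
  have hfin : volume P ≠ ⊤ := hPc.measure_lt_top.ne
  have e2 : ∀ h : ℝ, volume (Prod.mk h ⁻¹' T) =
      (Set.Ioo (0:ℝ) 1).indicator (fun h => ENNReal.ofReal (h ^ m) * volume P) h := by
    intro h
    by_cases hh : h ∈ Set.Ioo (0:ℝ) 1
    · rw [Set.indicator_of_mem hh]
      have : Prod.mk h ⁻¹' T = h • P := by
        ext y
        rw [Set.mem_smul_set_iff_inv_smul_mem₀ hh.1.ne']
        exact ⟨fun a => a.2, fun a => ⟨hh, a⟩⟩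
      rw [this, Measure.addHaar_smul_of_nonneg volume hh.1.le]
      simp
    · rw [Set.indicator_of_notMem hh]
      have : Prod.mk h ⁻¹' T = ∅ := by
        ext y
        exact ⟨fun a => hh a.1, fun a => a.elim⟩
      rw [this, measure_empty]
  simp only [e2]
  rw [lintegral_indicator measurableSet_Ioo, lintegral_mul_const _ (by fun_prop),
    ← ofReal_integral_eq_lintegral_ofReal]
  · rw [← integral_Ioc_eq_integral_Ioo, ← intervalIntegral.integral_of_le zero_le_one, integral_pow]
    conv_rhs => rw [← ENNReal.ofReal_toReal hfin]
    rw [← ENNReal.ofReal_mul (by simp; positivity)]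
    apply le_of_eq
    congr 1
    simp
    ring
  · exact ((continuous_pow m).integrableOn_Icc (a := 0) (b := 1)).mono_set Set.Ioo_subset_Icc_self
  · filter_upwards [ae_restrict_mem measurableSet_Ioo] with x hx
    exact pow_nonneg hx.1.le _

theorem poly_count (m : ℕ) (P : Set (Fin m → ℝ))
    (hP : ∃ V : Finset (Fin m → ℤ),
      P = convexHull ℝ ((fun (v : Fin m → ℤ) (j : Fin m) => (v j : ℝ)) '' ↑V))
    (hPfull : (interior P).Nonempty)
    (hPpos : P ⊆ {x | ∀ j, 0 ≤ x j}) (n : ℕ) (lam : ℕ)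
    (hlam_def : lam = ⌈Real.exp 1 *
      (((m + 1 : ℝ) * n / (MeasureTheory.volume P).toReal) ^ ((1 : ℝ) / (m + 1)))⌉₊)
    (hlam_m : m ≤ lam) :
    ∃ U : Finset (Fin (m + 1) →₀ ℕ), n < U.card ∧ ∀ u ∈ U, u (Fin.last m) ≤ lam ∧
      (fun j : Fin m => (u j.castSucc : ℝ)) ∈ ((lam : ℝ) - u (Fin.last m)) • P := by
  obtain ⟨V, hV⟩ := hP
  have hPconv : Convex ℝ P := by rw [hV]; exact convex_convexHull _ _
  have hPne : P.Nonempty := hPfull.mono interior_subset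
  have hPc : IsCompact P := by
    rw [hV]; exact (V.finite_toSet.image _).isCompact_convexHull ℝ
  have hvP : ∀ k : V, rl (k : Fin m → ℤ) ∈ P := fun k => by
    rw [hV]; exact subset_convexHull _ _ ⟨k, k.2, rfl⟩
  let v : V → Fin (m + 1) → ℤ := fun k => Fin.snoc (k : Fin m → ℤ) 1
  obtain ⟨Z, hZ, hvol⟩ := cone_count v (Fin.last m) (fun k => by simp [v]) lam (by simpa using hlam_m)
  -- decomposition of Z
  have hcomp : ∀ (c : V → ℝ) (x : Fin (m + 1) → ℝ), ∑ k, c k • rl (v k) = x ↔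
      (∑ k, c k = x (Fin.last m) ∧ ∑ k, c k • rl (k : Fin m → ℤ) = fun j => x j.castSucc) := by
    intro c x
    constructor
    · rintro rfl
      constructor
      · simp [rl, v]
      · funext j; simp [rl, v]
    · rintro ⟨h1, h2⟩
      funext j
      refine Fin.lastCases ?_ (fun j => ?_) j
      · rw [← h1]; simp [rl, v]
      · have := congrFun h2 j
        rw [← this]; simp [rl, v]
  have hmemP : ∀ z ∈ Z, (0 ≤ z (Fin.last m) ∧ z (Fin.last m) ≤ lam) ∧
      (fun j : Fin m => (z j.castSucc : ℝ)) ∈ (z (Fin.last m) : ℝ) • P := by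
    intro z hz
    obtain ⟨h1, c, hc, hcs⟩ := hZ z hz
    obtain ⟨h2, h3⟩ := (hcomp c (rl z)).1 hcs
    have h4 : (0:ℝ) ≤ z (Fin.last m) := by
      change 0 ≤ rl z (Fin.last m)
      rw [← h2]; exact Finset.sum_nonneg fun k _ => hc k
    refine ⟨⟨by exact_mod_cast h4, h1⟩, ?_⟩
    have := cone_mem hPconv hPne c hc (fun k : V => rl (k : Fin m → ℤ)) hvP
    rw [h2, h3] at this
    exact this
  have hpos : ∀ z ∈ Z, ∀ j : Fin m, 0 ≤ z j.castSucc := by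
    intro z hz j
    obtain ⟨⟨h1, -⟩, y, hy, hyz⟩ := hmemP z hz
    have h2 := hPpos hy j
    have h3 := congrFun hyz j
    simp only [Pi.smul_apply, smul_eq_mul] at h3
    have : (0:ℝ) ≤ z j.castSucc := by
      rw [← h3]; exact mul_nonneg (by exact_mod_cast h1) h2
    exact_mod_cast this
  have hcard : (n : ℝ) < Z.card := by
    have h1 : ENNReal.ofReal ((volume P).toReal / (m + 1)) ≤ ENNReal.ofReal
        (Z.card / ((m + 1).factorial * (lam + 1).choose (m + 1))) := by
      refine (vol_cone m P hPc (Fin.last m)).trans ((measure_mono ?_).trans (by simpa only [Fintype.card_fin] using hvol))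
      rintro x ⟨hx0, hx1, hx2⟩
      refine ⟨?_, hx1⟩
      obtain ⟨y, hy, hyx⟩ := hx2
      rw [hV] at hy
      have hsub := convexHull_min (𝕜 := ℝ) (s := ((fun (v : Fin m → ℤ) (j : Fin m) => (v j : ℝ)) '' ↑V))
        (t := Fintype.linearCombination ℝ (fun k : V => rl (k : Fin m → ℤ)) '' stdSimplex ℝ (↥V)) (by
          rintro _ ⟨k, hk, rfl⟩
          refine ⟨Pi.single ⟨k, hk⟩ 1, single_mem_stdSimplex ℝ _, ?_⟩
          rw [Fintype.linearCombination_apply_single, one_smul]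
          rfl) ((convex_stdSimplex ℝ (↥V)).linear_image _)
      obtain ⟨c, ⟨hc0, hc1⟩, hcy⟩ := hsub hy
      rw [Fintype.linearCombination_apply] at hcy
      refine ⟨fun k : V => x (Fin.last m) * c k, fun k : V => mul_nonneg hx0.le (hc0 k), (hcomp _ _).2 ⟨?_, ?_⟩⟩
      · rw [← Finset.mul_sum, hc1, mul_one]
      · simp only [mul_smul, ← Finset.smul_sum, hcy]
        refine hyx.trans ?_
        funext j
        simp [Fin.removeNth]
    have hVp : 0 < (volume P).toReal := by
      apply ENNReal.toReal_pos _ hPc.measure_lt_top.ne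
      exact (Measure.measure_pos_of_nonempty_interior _ hPfull).ne'
    set W := (volume P).toReal
    have h2 := (ENNReal.ofReal_le_ofReal_iff (by positivity)).1 h1
    have h3 := choose_lower (m + 1) (lam + 1) (by omega)
    have h4 : (Real.exp 1) ^ (m + 1) * ((m + 1 : ℝ) * n / W) < ((lam + 1 : ℕ) : ℝ) ^ (m + 1) := by
      have h5 : (Real.exp 1 * (((m + 1 : ℝ) * n / W) ^ ((1 : ℝ) / (m + 1)))) < (lam + 1 : ℕ) := by
        refine lt_of_le_of_lt (Nat.le_ceil _) ?_
        rw [← hlam_def]; push_cast; linarith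
      have h6 := pow_lt_pow_left₀ h5 (by positivity) (n := m + 1) (by omega)
      rw [mul_pow] at h6
      have h7 : ((((m + 1 : ℝ) * n / W) ^ ((1 : ℝ) / (m + 1)))) ^ (m + 1) = (m + 1 : ℝ) * n / W := by
        have := Real.rpow_inv_natCast_pow (x := (m + 1 : ℝ) * n / W) (by positivity) (n := m + 1) (by omega)
        push_cast at this
        rw [one_div, this]
      rwa [h7] at h6
    have h8 := Real.pow_div_factorial_le_exp (x := ((m + 1 : ℕ) : ℝ)) (by positivity) (m + 1)
    have h9 : Real.exp ((m + 1 : ℕ) : ℝ) = Real.exp 1 ^ (m + 1) := by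
      rw [← Real.exp_nat_mul, mul_one]
    rw [h9] at h8
    set Ee := Real.exp 1 ^ (m + 1)
    have hch : (0:ℝ) < (lam + 1).choose (m + 1) := by
      exact_mod_cast Nat.choose_pos (by omega)
    rw [div_le_div_iff₀ (by positivity) (by positivity)] at h2
    rw [div_pow, div_le_iff₀ (by positivity)] at h3
    rw [div_le_iff₀ (by positivity)] at h8
    set C : ℝ := (((lam + 1).choose (m + 1) : ℕ) : ℝ)
    set F : ℝ := (((m + 1).factorial : ℕ) : ℝ)
    set L : ℝ := ((lam + 1 : ℕ) : ℝ) ^ (m + 1)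
    set D : ℝ := ((m + 1 : ℕ) : ℝ) ^ (m + 1)
    have hF : 0 < F := by simp only [F]; positivity
    have hD : 0 < D := by simp only [D]; positivity
    rw [mul_div_assoc', div_lt_iff₀ hVp] at h4
    -- h2 : W * (F * C) ≤ Z * (m+1);  h3 : L ≤ C * D ; h8 : D ≤ Ee * F ; h4 : Ee * ((m+1) * n) < L * W
    have hm1 : (0:ℝ) < m + 1 := by positivity
    have a1 : D * ((m + 1) * n) ≤ Ee * F * ((m + 1) * n) :=
      mul_le_mul_of_nonneg_right h8 (by positivity)
    have a2 : Ee * ((m + 1) * n) * F < L * W * F := mul_lt_mul_of_pos_right h4 hF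
    have a3 : L * (W * F) ≤ C * D * (W * F) := mul_le_mul_of_nonneg_right h3 (by positivity)
    have a4 : W * (F * C) * D ≤ Z.card * (m + 1) * D := mul_le_mul_of_nonneg_right h2 hD.le
    have a5 : (D * (m + 1)) * n < (D * (m + 1)) * Z.card := by nlinarith
    exact lt_of_mul_lt_mul_left a5 (by positivity)
  let g : (Fin (m + 1) → ℤ) → (Fin (m + 1) →₀ ℕ) := fun z => Finsupp.equivFunOnFinite.symm
    (Fin.snoc (fun j : Fin m => (z j.castSucc).toNat) ((lam : ℤ) - z (Fin.last m)).toNat)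
  have hg1 : ∀ z (j : Fin m), g z j.castSucc = (z j.castSucc).toNat := fun z j => by simp [g]
  have hg2 : ∀ z, g z (Fin.last m) = ((lam : ℤ) - z (Fin.last m)).toNat := fun z => by simp [g]
  refine ⟨Z.image g, ?_, ?_⟩
  · rw [Finset.card_image_of_injOn]
    · exact_mod_cast hcard
    · intro z hz z' hz' h
      funext j
      refine Fin.lastCases ?_ (fun j => ?_) j
      · have := DFunLike.congr_fun h (Fin.last m)
        rw [hg2, hg2] at this
        have a := (hmemP z hz).1
        have b := (hmemP z' hz').1
        omega
      · have := DFunLike.congr_fun h j.castSucc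
        rw [hg1, hg1] at this
        have a := hpos z hz j
        have b := hpos z' hz' j
        omega
  · intro u hu
    obtain ⟨z, hz, rfl⟩ := Finset.mem_image.1 hu
    obtain ⟨⟨h1, h2⟩, h3⟩ := hmemP z hz
    rw [hg2]
    refine ⟨by omega, ?_⟩
    have e1 : ((lam : ℝ) - (((lam : ℤ) - z (Fin.last m)).toNat : ℝ)) = (z (Fin.last m) : ℝ) := by
      have : ((((lam : ℤ) - z (Fin.last m)).toNat : ℤ) : ℝ) = ((lam : ℤ) - z (Fin.last m) : ℤ) := by
        rw [Int.toNat_of_nonneg (by omega)]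
      push_cast at this
      rw [this]; ring
    rw [e1]
    convert h3 using 2 with j
    rw [hg1]
    have : (((z j.castSucc).toNat : ℤ) : ℝ) = (z j.castSucc : ℝ) := by
      rw [Int.toNat_of_nonneg (hpos z hz j)]
    exact_mod_cast this

end part4
end LD


namespace LD
section part5
open MvPolynomial
variable {F : Type*} [Field F]

lemma nonzero_count : ∀ (m : ℕ) (p : MvPolynomial (Fin m) F) (S : Fin m → Finset F) (d : Fin m → ℕ),
    p ≠ 0 → (∀ i, degreeOf i p ≤ d i) →
    ∏ i, ((S i).card - d i) ≤ ((Fintype.piFinset S).filter (fun x => eval x p ≠ 0)).card := by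
  intro m
  induction m with
  | zero =>
    intro p S d hp _
    simp only [Finset.univ_eq_empty, Finset.prod_empty]
    apply Finset.card_pos.2
    obtain ⟨c, rfl⟩ := C_surjective (R := F) (Fin 0) p
    refine ⟨fun i => i.elim0, ?_⟩
    rw [Finset.mem_filter]
    refine ⟨by rw [Fintype.mem_piFinset]; exact fun i => i.elim0, ?_⟩
    rw [eval_C]
    rintro rfl
    simp at hp
  | succ m ih =>
    intro p S d hp hd
    let q := finSuccEquiv F m p
    have hq : q ≠ 0 := by simpa [q] using hp
    have hlc : q.leadingCoeff ≠ 0 := by simpa using hq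
    have h1 := ih q.leadingCoeff (fun i => S i.succ) (fun i => d i.succ) hlc (fun i =>
      (degreeOf_coeff_finSuccEquiv p i _).trans (hd i.succ))
    let G := (Fintype.piFinset fun i : Fin m => S i.succ).filter (fun x => eval x q.leadingCoeff ≠ 0)
    let r : (Fin m → F) → Polynomial F := fun x => q.map (eval x)
    have hr : ∀ x ∈ G, r x ≠ 0 := by
      intro x hx h
      have := (Finset.mem_filter.1 hx).2
      apply this
      have h2 : (r x).coeff q.natDegree = 0 := by rw [h]; simp
      simpa [r, Polynomial.coeff_map] using h2
    have hrd : ∀ x, (r x).natDegree ≤ d 0 := by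
      intro x
      refine (Polynomial.natDegree_map_le).trans ?_
      simp only [q, natDegree_finSuccEquiv]
      exact hd 0
    let T : Finset (Σ _ : (Fin m → F), F) := G.sigma (fun x => (S 0) \ (r x).roots.toFinset)
    have hTc : G.card * ((S 0).card - d 0) ≤ T.card := by
      rw [Finset.card_sigma, ← smul_eq_mul]
      apply Finset.card_nsmul_le_sum
      intro x hx
      have a := Finset.le_card_sdiff (r x).roots.toFinset (S 0)
      have b := (Multiset.toFinset_card_le (r x).roots).trans ((Polynomial.card_roots' _).trans (hrd x))
      omega
    have hT : T.card ≤ ((Fintype.piFinset S).filter (fun x => eval x p ≠ 0)).card := by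
      apply Finset.card_le_card_of_injOn (fun t => (Fin.cons t.2 t.1 : Fin (m + 1) → F))
      · rintro ⟨x, a⟩ ht
        obtain ⟨hx, ha⟩ := Finset.mem_sigma.1 ht
        simp only at hx ha
        obtain ⟨ha1, ha2⟩ := Finset.mem_sdiff.1 ha
        simp only [Finset.coe_filter]
        refine ⟨?_, ?_⟩
        · rw [Fintype.mem_piFinset]
          intro i
          refine Fin.cases ?_ (fun i => ?_) i
          · simpa using ha1
          · simpa using Fintype.mem_piFinset.1 (Finset.mem_filter.1 hx).1 i
        · rw [eval_eq_eval_mv_eval']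
          intro h0
          apply ha2
          rw [Multiset.mem_toFinset, Polynomial.mem_roots (hr x hx)]
          exact h0
      · rintro ⟨x, a⟩ _ ⟨x', a'⟩ _ h
        obtain ⟨h1, h2⟩ := Fin.cons_inj.1 h
        simp only at h1 h2
        subst h1; subst h2; rfl
    rw [Fin.prod_univ_succ, mul_comm]
    exact (Nat.mul_le_mul_right _ h1).trans (hTc.trans hT)

/-- version for shifted supports and real bounds -/
lemma nonzero_count' (m : ℕ) (g : MvPolynomial (Fin m) F) (hg : g ≠ 0) (S : Fin m → Finset F)
    (hS : ∀ i, ∀ c ∈ S i, c ≠ 0) (D : Fin m → ℝ) (hDS : ∀ i, D i ≤ (S i).card)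
    (hD : ∀ u ∈ g.support, ∀ u' ∈ g.support, ∀ i, (u i : ℝ) - u' i ≤ D i) :
    ∏ i, (((S i).card : ℝ) - D i) ≤ ((Fintype.piFinset S).filter (fun x => eval x g ≠ 0)).card := by
  have hne : g.support.Nonempty := by simpa [Finset.nonempty_iff_ne_empty] using hg
  let a : Fin m →₀ ℕ := Finsupp.equivFunOnFinite.symm fun i => g.support.inf' hne (fun u => u i)
  have ha : ∀ u ∈ g.support, a ≤ u := by
    intro u hu i
    simp only [a, Finsupp.equivFunOnFinite_symm_apply_apply]
    exact Finset.inf'_le _ hu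
  let g' := g.divMonomial a
  have hgg' : g = monomial a 1 * g' := by
    ext u
    rw [coeff_monomial_mul']
    split_ifs with h
    · simp only [g', coeff_divMonomial, one_mul]
      rw [add_tsub_cancel_of_le h]
    · by_contra h'
      exact h (ha u (mem_support_iff.2 h'))
  have hg' : g' ≠ 0 := by rintro h; rw [h, mul_zero] at hgg'; exact hg hgg'
  have hdeg : ∀ i, (degreeOf i g' : ℝ) ≤ D i := by
    intro i
    obtain ⟨u', hu', hu'e⟩ := Finset.exists_mem_eq_inf' hne (fun u => u i)
    have hai : a i = u' i := by
      simp only [a, Finsupp.equivFunOnFinite_symm_apply_apply]; exact hu'e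
    have h0 : 0 ≤ D i := by simpa using hD u' hu' u' hu' i
    have : degreeOf i g' ≤ ⌊D i⌋₊ := by
      rw [degreeOf_le_iff]
      intro w hw
      apply Nat.le_floor
      have hw' : a + w ∈ g.support := by
        rw [mem_support_iff] at hw ⊢
        simpa [g', coeff_divMonomial] using hw
      have := hD _ hw' u' hu' i
      rw [← hai] at this
      simpa using this
    exact (Nat.cast_le.2 this).trans (Nat.floor_le h0)
  have h := nonzero_count m g' S (fun i => degreeOf i g') hg' (fun i => le_rfl)
  have hcard : ((Fintype.piFinset S).filter (fun x => eval x g' ≠ 0)).card ≤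
      ((Fintype.piFinset S).filter (fun x => eval x g ≠ 0)).card := by
    apply Finset.card_le_card
    intro x hx
    obtain ⟨h1, h2⟩ := Finset.mem_filter.1 hx
    refine Finset.mem_filter.2 ⟨h1, ?_⟩
    rw [hgg', eval_mul, eval_monomial, one_mul]
    refine mul_ne_zero ?_ h2
    rw [Finsupp.prod, Finset.prod_ne_zero_iff]
    intro i _
    exact pow_ne_zero _ (hS i _ (Fintype.mem_piFinset.1 h1 i))
  have h3 := h.trans hcard
  refine le_trans ?_ (Nat.cast_le.2 h3)
  push_cast
  apply Finset.prod_le_prod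
  · intro i _; linarith [hDS i]
  · intro i _
    have := hdeg i
    have h4 : ((S i).card : ℝ) ≤ ((S i).card - degreeOf i g' : ℕ) + degreeOf i g' := by
      have h4' : (S i).card ≤ ((S i).card - degreeOf i g') + degreeOf i g' := by omega
      exact_mod_cast h4'
    linarith

def nr {m : ℕ} (u : Fin m →₀ ℕ) : Fin m → ℝ := fun j => (u j : ℝ)

lemma nr_add {m : ℕ} (u w : Fin m →₀ ℕ) : nr (u + w) = nr u + nr w := by
  funext j; simp [nr]

lemma supp_pow {m : ℕ} {P : Set (Fin m → ℝ)} (hP : Convex ℝ P) (hne : P.Nonempty)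
    {f : MvPolynomial (Fin m) F} (hf : ∀ u ∈ f.support, nr u ∈ P) (k : ℕ) :
    ∀ u ∈ (f ^ k).support, nr u ∈ (k : ℝ) • P := by
  induction k with
  | zero =>
    intro u hu
    rw [pow_zero] at hu
    have : u = 0 := by
      by_contra h
      rw [mem_support_iff, coeff_one, if_neg (Ne.symm h)] at hu
      exact hu rfl
    subst this
    rw [Nat.cast_zero, Set.zero_smul_set hne]
    funext j; simp [nr]
  | succ k ih =>
    intro u hu
    rw [pow_succ] at hu
    obtain ⟨a, ha, b, hb, rfl⟩ := Finset.mem_add.1 (support_mul _ _ hu)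
    rw [nr_add]
    push_cast
    rw [hP.add_smul (by positivity) zero_le_one, one_smul]
    exact Set.add_mem_add (ih a ha) (hf b hb)

lemma supp_aeval {m : ℕ} {P : Set (Fin m → ℝ)} (hP : Convex ℝ P) (hne : P.Nonempty)
    {f : MvPolynomial (Fin m) F} (hf : ∀ u ∈ f.support, nr u ∈ P) (lam : ℕ)
    (Q : MvPolynomial (Fin (m + 1)) F) (hQ : ∀ u ∈ Q.support, u (Fin.last m) ≤ lam ∧
      (fun j : Fin m => (u j.castSucc : ℝ)) ∈ ((lam : ℝ) - u (Fin.last m)) • P) :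
    ∀ w ∈ (aeval (Fin.snoc X f : Fin (m + 1) → MvPolynomial (Fin m) F) Q).support,
      nr w ∈ (lam : ℝ) • P := by
  intro w hw
  rw [aeval_def, eval₂_eq'] at hw
  obtain ⟨u, hu, hw⟩ := Finset.mem_biUnion.1 (support_sum hw)
  rw [Fin.prod_univ_castSucc] at hw
  simp only [Fin.snoc_castSucc, Fin.snoc_last] at hw
  let u' : Fin m →₀ ℕ := Finsupp.equivFunOnFinite.symm fun j => u j.castSucc
  have e : (algebraMap F (MvPolynomial (Fin m) F)) (coeff u Q) * ((∏ x : Fin m, (X x : MvPolynomial (Fin m) F) ^ u x.castSucc) * f ^ u (Fin.last m)) =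
     monomial u' (coeff u Q) * f ^ u (Fin.last m) := by
    rw [monomial_eq, Finsupp.prod_fintype _ _ (by simp), ← mul_assoc]
    rfl
  rw [e] at hw
  obtain ⟨a, ha, b, hb, rfl⟩ := Finset.mem_add.1 (support_mul _ _ hw)
  have ha' : a = u' := by simpa using support_monomial_subset ha
  subst ha'
  obtain ⟨h1, h2⟩ := hQ u hu
  have h3 := supp_pow hP hne hf _ b hb
  have : (lam : ℝ) = (lam - u (Fin.last m)) + u (Fin.last m) := by ring
  rw [nr_add, this, hP.add_smul (by simpa using h1) (by positivity)]
  exact Set.add_mem_add h2 h3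

lemma exists_Q {N n : ℕ} (U : Finset (Fin N →₀ ℕ)) (hU : n < U.card) (pt : Fin n → Fin N → F) :
    ∃ Q : MvPolynomial (Fin N) F, Q ≠ 0 ∧ Q.support ⊆ U ∧ ∀ j, eval (pt j) Q = 0 := by
  let T : (U → F) →ₗ[F] MvPolynomial (Fin N) F :=
    Fintype.linearCombination F (fun u : U => monomial (u : Fin N →₀ ℕ) (1 : F))
  have hT : ∀ c (w : Fin N →₀ ℕ), coeff w (T c) = ∑ u : U, if (u : Fin N →₀ ℕ) = w then c u else 0 := by
    intro c w
    simp [T, Fintype.linearCombination_apply, coeff_sum, coeff_smul, coeff_monomial]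
  let L : (U → F) →ₗ[F] (Fin n → F) := (LinearMap.pi fun j => (aeval (pt j)).toLinearMap) ∘ₗ T
  have hker : LinearMap.ker L ≠ ⊥ := LinearMap.ker_ne_bot_of_finrank_lt (by simpa using hU)
  obtain ⟨c, hc, hc0⟩ := Submodule.exists_mem_ne_zero_of_ne_bot hker
  refine ⟨T c, ?_, ?_, ?_⟩
  · intro h
    apply hc0
    funext w
    have := hT c w
    rw [h, Finset.sum_eq_single w (fun u _ hu => if_neg (fun h => hu (Subtype.ext h))) (by simp)] at this
    simpa using this.symm
  · intro w hw
    by_contra hwU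
    rw [mem_support_iff, hT] at hw
    apply hw
    apply Finset.sum_eq_zero
    intro u _
    rw [if_neg]
    intro h
    exact hwU (h ▸ u.2)
  · intro j
    have := congrFun (LinearMap.mem_ker.1 hc) j
    simpa [L, aeval_eq_eval] using this

end part5
end LD


/-- **Basic list-decoding theorem with explicit parameter choice.**  Let `P ⊆ ℝ^m` be an
`m`-dimensional lattice polytope in the nonnegative orthant with projection lengths `ℓ_j`, and
let `S = {p_1,…,p_n} ⊆ (F_q^*)^m` be distinct points containing a box `S_1 × ⋯ × S_m` with
`|S_j| = s_j > ℓ_j`.  Set `λ = ⌈e·((m+1)·n / vol(P))^{1/(m+1)}⌉` and assume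
`min_j s_j/ℓ_j > λ ≥ m`.  Then for every integer `t > n − ∏_j (s_j − λ·ℓ_j)` and every
`y ∈ F_q^n` there is a nonzero `Q ∈ F_q[X_1,…,X_m,Y]` with support in `λ·Pyr(P) ∩ ℤ^{m+1}`
and `Q(p_j, y_j) = 0` for all `j`, such that every `f ∈ L_q(P)` agreeing with `y` on at
least `t` indices satisfies `Q(X, f(X)) = 0`. -/
theorem basic_list_decoding_explicit
    (Fq : Type*) [Field Fq] [Fintype Fq]
    (m : ℕ) (hm : 1 ≤ m) (P : Set (Fin m → ℝ))
    (hP : ∃ V : Finset (Fin m → ℤ),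
      P = convexHull ℝ ((fun (v : Fin m → ℤ) (j : Fin m) => (v j : ℝ)) '' ↑V))
    (hPfull : (interior P).Nonempty)
    (hPpos : P ⊆ {x | ∀ j, 0 ≤ x j})
    (ℓ : Fin m → ℝ)
    (hℓ : ∀ j, ℓ j = sSup ((fun x => x j) '' P) - sInf ((fun x => x j) '' P))
    (n : ℕ) (p : Fin n → (Fin m → Fq)) (hp_inj : Function.Injective p)
    (hp0 : ∀ j, ∀ i, p j i ≠ 0)
    (Sbox : Fin m → Finset Fq) (hSbox0 : ∀ j, ∀ c ∈ Sbox j, c ≠ 0)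
    (s : Fin m → ℕ) (hs : ∀ j, (Sbox j).card = s j) (hsℓ : ∀ j, ℓ j < s j)
    (hboxS : ∀ q ∈ Fintype.piFinset Sbox, ∃ j : Fin n, p j = q)
    (lam : ℕ)
    (hlam_def : lam = ⌈Real.exp 1 *
      (((m + 1 : ℝ) * n / (MeasureTheory.volume P).toReal) ^ ((1 : ℝ) / (m + 1)))⌉₊)
    (hlam_m : m ≤ lam)
    (hlam_lt : ∀ j, (lam : ℝ) * ℓ j < s j)
    (t : ℕ)
    (ht_gt : (n : ℝ) - ∏ j, ((s j : ℝ) - lam * ℓ j) < t) :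
    ∀ y : Fin n → Fq,
      ∃ Q : MvPolynomial (Fin (m + 1)) Fq, Q ≠ 0 ∧
        (∀ u ∈ Q.support, (fun j => (u j : ℝ)) ∈ (lam : ℝ) • pyr P) ∧
        (∀ j : Fin n, MvPolynomial.eval (Fin.snoc (p j) (y j)) Q = 0) ∧
        ∀ f : MvPolynomial (Fin m) Fq,
          (∀ u ∈ f.support, (fun j => (u j : ℝ)) ∈ P) →
          t ≤ (Finset.univ.filter (fun j : Fin n => MvPolynomial.eval (p j) f = y j)).card →
          MvPolynomial.aeval (Fin.snoc MvPolynomial.X f) Q = 0 := by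
  intro y
  have hlam0 : (0:ℝ) < lam := by
    have : 0 < lam := by omega
    exact_mod_cast this
  have hconv : Convex ℝ P := by
    obtain ⟨V, rfl⟩ := hP
    exact convex_convexHull ℝ _
  have hcomp : IsCompact P := by
    obtain ⟨V, rfl⟩ := hP
    exact (V.finite_toSet.image _).isCompact_convexHull ℝ
  have hne : P.Nonempty := hPfull.mono interior_subset
  obtain ⟨U, hUn, hU⟩ := LD.poly_count m P hP hPfull hPpos n lam hlam_def hlam_m
  obtain ⟨Q, hQ0, hQU, hQe⟩ := LD.exists_Q U hUn (fun j => (Fin.snoc (p j) (y j) : Fin (m+1) → Fq))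
  refine ⟨Q, hQ0, ?_, hQe, ?_⟩
  · intro u hu
    obtain ⟨h1, h2⟩ := hU u (hQU hu)
    obtain ⟨z, hz, hzu⟩ := Set.mem_smul_set.1 h2
    have h1' : (u (Fin.last m) : ℝ) ≤ lam := by exact_mod_cast h1
    have hc : Convex ℝ (pyr P) := convex_convexHull ℝ _
    have ha : (Fin.snoc z (0:ℝ) : Fin (m+1) → ℝ) ∈ pyr P :=
      subset_convexHull ℝ _ (Or.inr ⟨z, hz, rfl⟩)
    have hb : (Fin.snoc (0 : Fin m → ℝ) (1:ℝ) : Fin (m+1) → ℝ) ∈ pyr P :=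
      subset_convexHull ℝ _ (Or.inl rfl)
    have hab := hc ha hb (a := ((lam:ℝ) - u (Fin.last m)) / lam) (b := (u (Fin.last m) : ℝ) / lam)
      (div_nonneg (by linarith) hlam0.le) (by positivity) (by field_simp; ring)
    refine Set.mem_smul_set.2 ⟨_, hab, ?_⟩
    funext j
    refine Fin.lastCases ?_ (fun i => ?_) j
    · simp only [Pi.smul_apply, Pi.add_apply, Fin.snoc_last, smul_eq_mul]
      field_simp
      ring
    · have := congrFun hzu i
      simp only [Pi.smul_apply, smul_eq_mul] at this
      simp only [Pi.smul_apply, Pi.add_apply, Fin.snoc_castSucc, smul_eq_mul, ← this]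
      simp
      field_simp
  · intro f hf ht
    by_contra hg
    have hsupp := LD.supp_aeval hconv hne hf lam Q (fun u hu => hU u (hQU hu))
    have hcnt := LD.nonzero_count' m _ hg Sbox hSbox0 (fun i => (lam:ℝ) * ℓ i)
      (fun i => by rw [hs]; exact (hlam_lt i).le) (by
        intro u hu u' hu' i
        obtain ⟨z, hz, hzu⟩ := Set.mem_smul_set.1 (hsupp u hu)
        obtain ⟨z', hz', hzu'⟩ := Set.mem_smul_set.1 (hsupp u' hu')
        have e1 := congrFun hzu i
        have e2 := congrFun hzu' i
        simp only [Pi.smul_apply, smul_eq_mul, LD.nr] at e1 e2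
        have hci : IsCompact ((fun x : Fin m → ℝ => x i) '' P) := hcomp.image (continuous_apply i)
        have l1 : z i ≤ sSup ((fun x : Fin m → ℝ => x i) '' P) :=
          le_csSup hci.bddAbove ⟨z, hz, rfl⟩
        have l2 : sInf ((fun x : Fin m → ℝ => x i) '' P) ≤ z' i :=
          csInf_le hci.bddBelow ⟨z', hz', rfl⟩
        rw [← e1, ← e2, ← mul_sub, hℓ]
        exact mul_le_mul_of_nonneg_left (by linarith) hlam0.le)
    have hev : ∀ x : Fin m → Fq, MvPolynomial.eval x
        (MvPolynomial.aeval (Fin.snoc MvPolynomial.X f : Fin (m+1) → MvPolynomial (Fin m) Fq) Q)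
        = MvPolynomial.eval (Fin.snoc x (MvPolynomial.eval x f) : Fin (m+1) → Fq) Q := by
      intro x
      rw [MvPolynomial.aeval_def, MvPolynomial.algebraMap_eq, MvPolynomial.eval_eval₂,
        MvPolynomial.eval]
      congr 1
      congr 1
      · ext; simp
      · funext j
        refine Fin.lastCases ?_ (fun i => ?_) j <;> simp
    have hle : ((Fintype.piFinset Sbox).filter (fun x => MvPolynomial.eval x
        (MvPolynomial.aeval (Fin.snoc MvPolynomial.X f : Fin (m+1) → MvPolynomial (Fin m) Fq) Q) ≠ 0)).card
        ≤ (Finset.univ.filter (fun j : Fin n => ¬ MvPolynomial.eval (p j) f = y j)).card := by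
      refine le_trans (Finset.card_le_card ?_) (Finset.card_image_le (f := p))
      intro x hx
      obtain ⟨hx1, hx2⟩ := Finset.mem_filter.1 hx
      obtain ⟨j, rfl⟩ := hboxS x hx1
      refine Finset.mem_image_of_mem p (Finset.mem_filter.2 ⟨Finset.mem_univ _, fun h => hx2 ?_⟩)
      rw [hev, h]
      exact hQe j
    have htot := Finset.card_filter_add_card_filter_not (s := (Finset.univ : Finset (Fin n)))
      (fun j : Fin n => MvPolynomial.eval (p j) f = y j)
    rw [Finset.card_univ, Fintype.card_fin] at htot
    have hle' := (Nat.cast_le (α := ℝ)).2 hle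
    have ht' := (Nat.cast_le (α := ℝ)).2 ht
    have htot' := congrArg (Nat.cast : ℕ → ℝ) htot
    push_cast at htot'
    simp only [hs] at hcnt
    have := hcnt.trans hle'
    linarith
end
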